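/- arXiv:1907.10531 — 2 statements merged into one kernel-verified Lean document; each statement's English description precedes it below -/
import Mathlib

section
/- Let F : ℝ → ℝ≥0 be log-concave and f₁, f₂, f₃, f₄ : [a,b] → ℝ≥0 continuous, α, β > 0. If for every subinterval [a',b'] ⊆ [a,b] and every real δ one has (∫_{a'}^{b'} e^{δt} f₁ dt)^α (∫_{a'}^{b'} e^{δt} f₂ dt)^β ≤ (∫_{a'}^{b'} e^{δt} f₃ dt)^α (∫_{a'}^{b'} e^{δt} f₄ dt)^β, then (∫_a^b F f₁ dt)^α (∫_a^b F f₂ dt)^β ≤ (∫_a^b F f₃ dt)^α (∫_a^b F f₄ dt)^β. -/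
open MeasureTheory Real Set

def LCseq (x : ℕ → ℝ) : Prop := ∀ i j, i ≤ j → x i * x (j+2) ≤ x (i+1) * x (j+1)

def wfun (m : ℕ) (a b c : ℝ) (i : ℕ) : ℝ :=
  a + b * ((i:ℝ) - (m+1)) + c * max ((i:ℝ) - (m+1)) 0

lemma wfun_lo (m : ℕ) (a b c : ℝ) (i : ℕ) (h : i ≤ m + 1) :
    wfun m a b c i = a + b * ((i:ℝ) - (m+1)) := by
  have : (i:ℝ) ≤ m + 1 := by exact_mod_cast h
  rw [wfun, max_eq_right (by linarith)]; ring

lemma wfun_hi (m : ℕ) (a b c : ℝ) (i : ℕ) (h : m + 1 ≤ i) :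
    wfun m a b c i = a + (b + c) * ((i:ℝ) - (m+1)) := by
  have : (m:ℝ) + 1 ≤ i := by exact_mod_cast h
  rw [wfun, max_eq_left (by linarith)]; ring

lemma LC_strict (x : ℕ → ℝ) (hx : LCseq x) (h0 : ∀ i, 0 ≤ x i) (m : ℕ)
    (hm : x m * x (m+2) < x (m+1) * x (m+1)) (i j : ℕ) (him : i ≤ m) (hmj : m ≤ j)
    (hi : 0 < x i) (hj : 0 < x (j+2)) : x i * x (j+2) < x (i+1) * x (j+1) := by
  have hpos : 0 < x (i+1) * x (j+1) := lt_of_lt_of_le (mul_pos hi hj) (hx i j (him.trans hmj))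
  have h1 : x i * x (m+1) ≤ x (i+1) * x m := by
    rcases him.eq_or_lt with rfl | h
    · rw [mul_comm]
    · obtain ⟨k, rfl⟩ : ∃ k, m = k + 1 := ⟨m-1, by omega⟩
      exact hx i k (by omega)
  have h2 : x (m+1) * x (j+2) ≤ x (m+2) * x (j+1) := by
    rcases hmj.eq_or_lt with rfl | h
    · rw [mul_comm]
    · exact hx (m+1) j h
  have h3 := mul_le_mul h1 h2 (mul_nonneg (h0 _) (h0 _)) (mul_nonneg (h0 _) (h0 _))
  have hm1 : 0 < x (m+1) * x (m+1) := lt_of_le_of_lt (mul_nonneg (h0 _) (h0 _)) hm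
  have h4 := mul_lt_mul_of_pos_left hm hpos
  by_contra hcon
  push Not at hcon
  have h5 := mul_le_mul_of_nonneg_left hcon hm1.le
  nlinarith

lemma perturb (n : ℕ) (x : ℕ → ℝ) (hx : LCseq x) (h0 : ∀ i, 0 ≤ x i) (hn : ∀ i, n ≤ i → x i = 0)
    (m : ℕ) (hm : x m * x (m+2) < x (m+1) * x (m+1)) (a b c : ℝ) :
    ∀ᶠ ε in nhds (0:ℝ), (∀ i, 0 ≤ x i * (1 + ε * wfun m a b c i)) ∧
      LCseq (fun i => x i * (1 + ε * wfun m a b c i)) := by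
  have e1 : ∀ i, ∀ᶠ ε in nhds (0:ℝ), 0 ≤ 1 + ε * wfun m a b c i := by
    intro i
    have : ContinuousAt (fun ε : ℝ => 1 + ε * wfun m a b c i) 0 := by fun_prop
    have h := this.eventually (lt_mem_nhds (a := 0) (by simp))
    exact h.mono fun _ h => le_of_lt h
  have e1' : ∀ᶠ ε in nhds (0:ℝ), ∀ i ∈ Finset.range n, 0 ≤ 1 + ε * wfun m a b c i :=
    (Filter.eventually_all_finset _).2 fun i _ => e1 i
  have e2 : ∀ i j, i ≤ j → ∀ᶠ ε in nhds (0:ℝ),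
      x i * (1 + ε * wfun m a b c i) * (x (j+2) * (1 + ε * wfun m a b c (j+2))) ≤
      x (i+1) * (1 + ε * wfun m a b c (i+1)) * (x (j+1) * (1 + ε * wfun m a b c (j+1))) := by
    intro i j hij
    by_cases hz : 0 < x i ∧ 0 < x (j+2)
    · by_cases hs : i ≤ m ∧ m ≤ j
      · have hl := LC_strict x hx h0 m hm i j hs.1 hs.2 hz.1 hz.2
        have c1 : ContinuousAt (fun ε : ℝ => x i * (1 + ε * wfun m a b c i) * (x (j+2) * (1 + ε * wfun m a b c (j+2)))) 0 := by fun_prop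
        have c2 : ContinuousAt (fun ε : ℝ => x (i+1) * (1 + ε * wfun m a b c (i+1)) * (x (j+1) * (1 + ε * wfun m a b c (j+1)))) 0 := by fun_prop
        have := c1.eventually_lt c2 (by simpa using hl)
        exact this.mono fun _ h => le_of_lt h
      · have key : ∃ A B : ℝ, wfun m a b c i = A + B * i ∧ wfun m a b c (i+1) = A + B * (i+1)
            ∧ wfun m a b c (j+1) = A + B * (j+1) ∧ wfun m a b c (j+2) = A + B * (j+2) := by
          by_cases h : i ≤ m
          · have : j + 1 ≤ m := by by_contra hh; exact hs ⟨h, by omega⟩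
            refine ⟨a - b * (m+1), b, ?_, ?_, ?_, ?_⟩ <;>
            · rw [wfun_lo _ _ _ _ _ (by omega)]; push_cast; ring
          · refine ⟨a - (b+c) * (m+1), b + c, ?_, ?_, ?_, ?_⟩ <;>
            · rw [wfun_hi _ _ _ _ _ (by omega)]; push_cast; ring
        obtain ⟨A, B, k1, k2, k3, k4⟩ := key
        filter_upwards [e1 i, e1 (i+1), e1 (j+1), e1 (j+2)] with ε p1 p2 p3 p4
        have hc : (1 + ε * wfun m a b c i) * (1 + ε * wfun m a b c (j+2)) ≤
          (1 + ε * wfun m a b c (i+1)) * (1 + ε * wfun m a b c (j+1)) := by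
          rw [k1, k2, k3, k4]
          have : (i:ℝ) ≤ j := by exact_mod_cast hij
          nlinarith [mul_nonneg (sq_nonneg (ε * B)) (by linarith : (0:ℝ) ≤ j + 1 - i)]
        calc _ = (x i * x (j+2)) * ((1 + ε * wfun m a b c i) * (1 + ε * wfun m a b c (j+2))) := by ring
          _ ≤ (x (i+1) * x (j+1)) * ((1 + ε * wfun m a b c (i+1)) * (1 + ε * wfun m a b c (j+1))) :=
            mul_le_mul (hx i j hij) hc (mul_nonneg p1 p4) (mul_nonneg (h0 _) (h0 _))
          _ = _ := by ring
    · have hz' : x i * x (j+2) = 0 := by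
        rcases (h0 i).eq_or_lt with h | h
        · rw [← h]; simp
        · rcases (h0 (j+2)).eq_or_lt with h' | h'
          · rw [← h']; simp
          · exact absurd ⟨h, h'⟩ hz
      filter_upwards [e1 (i+1), e1 (j+1)] with ε p1 p2
      calc _ = (x i * x (j+2)) * ((1 + ε * wfun m a b c i) * (1 + ε * wfun m a b c (j+2))) := by ring
        _ = 0 := by rw [hz']; simp
        _ ≤ _ := mul_nonneg (mul_nonneg (h0 _) p1) (mul_nonneg (h0 _) p2)
  have e2' : ∀ᶠ ε in nhds (0:ℝ), ∀ i ∈ Finset.range n, ∀ j ∈ Finset.range n, i ≤ j → 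
      x i * (1 + ε * wfun m a b c i) * (x (j+2) * (1 + ε * wfun m a b c (j+2))) ≤
      x (i+1) * (1 + ε * wfun m a b c (i+1)) * (x (j+1) * (1 + ε * wfun m a b c (j+1))) := by
    refine (Filter.eventually_all_finset _).2 fun i _ => (Filter.eventually_all_finset _).2 fun j _ => ?_
    by_cases h : i ≤ j
    · exact (e2 i j h).mono fun _ h _ => h
    · exact Filter.Eventually.of_forall fun _ h' => absurd h' h
  filter_upwards [e1', e2'] with ε p1 p2
  have q1 : ∀ i, 0 ≤ x i * (1 + ε * wfun m a b c i) := by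
    intro i
    by_cases h : i < n
    · exact mul_nonneg (h0 i) (p1 i (Finset.mem_range.2 h))
    · rw [hn i (by omega)]; simp
  refine ⟨q1, ?_⟩
  intro i j hij
  by_cases h : j < n
  · exact p2 i (Finset.mem_range.2 (by omega)) j (Finset.mem_range.2 h) hij
  · have : x (j+2) = 0 := hn _ (by omega)
    simp only [this, zero_mul, mul_zero]
    exact mul_nonneg (q1 _) (q1 _)

lemma exists_w (n : ℕ) (x h : ℕ → ℝ) (m : ℕ) (h0 : 0 < x m) (h1 : 0 < x (m+1)) (h2 : 0 < x (m+2)) :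
    ∃ a b c : ℝ, ∑ i ∈ Finset.range n, x i * wfun m a b c i = 0 ∧
      ∑ i ∈ Finset.range n, x i * wfun m a b c i * h i = 0 ∧
      ∃ i, i ≤ m + 2 ∧ x i * wfun m a b c i ≠ 0 := by
  let L : (Fin 3 → ℝ) →ₗ[ℝ] (Fin 2 → ℝ) :=
    { toFun := fun v => ![∑ i ∈ Finset.range n, x i * wfun m (v 0) (v 1) (v 2) i,
        ∑ i ∈ Finset.range n, x i * wfun m (v 0) (v 1) (v 2) i * h i]
      map_add' := by
        intro u v
        ext k
        fin_cases k <;> simp [wfun, ← Finset.sum_add_distrib] <;>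
          exact Finset.sum_congr rfl fun i _ => by ring
      map_smul' := by
        intro r v
        ext k
        fin_cases k <;> simp [wfun, Finset.mul_sum] <;>
          exact Finset.sum_congr rfl fun i _ => by ring }
  have hk : LinearMap.ker L ≠ ⊥ := LinearMap.ker_ne_bot_of_finrank_lt (by simp)
  obtain ⟨v, hv, hv0⟩ := Submodule.exists_mem_ne_zero_of_ne_bot hk
  have hv' : L v = 0 := hv
  refine ⟨v 0, v 1, v 2, congrFun hv' 0, congrFun hv' 1, ?_⟩
  by_contra hcon
  push Not at hcon
  apply hv0
  have w0 := (mul_eq_zero.1 (hcon m (by omega))).resolve_left h0.ne'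
  have w1 := (mul_eq_zero.1 (hcon (m+1) (by omega))).resolve_left h1.ne'
  have w2 := (mul_eq_zero.1 (hcon (m+2) (by omega))).resolve_left h2.ne'
  rw [wfun_lo _ _ _ _ _ (by omega)] at w0 w1
  rw [wfun_hi _ _ _ _ _ (by omega)] at w2
  push_cast at w0 w1 w2
  ext k
  fin_cases k <;> simp <;> linarith

lemma geom_of_nobreak (n : ℕ) (x : ℕ → ℝ) (hx : LCseq x) (h0 : ∀ i, 0 ≤ x i)
    (hn : ∀ i, n ≤ i → x i = 0) (hne : ∃ i, 0 < x i)
    (hb : ∀ m, 0 < x m → 0 < x (m+2) → x m * x (m+2) = x (m+1) * x (m+1)) :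
    ∃ k l, k ≤ l ∧ l < n ∧ ∃ r C : ℝ, 0 < r ∧ 0 < C ∧ (∀ i, k ≤ i → i ≤ l → x i = C * r ^ i) ∧
      ∀ i, ¬ (k ≤ i ∧ i ≤ l) → x i = 0 := by
  classical
  let S := (Finset.range n).filter fun i => 0 < x i
  have hmem : ∀ i, i ∈ S ↔ 0 < x i := by
    intro i
    simp only [S, Finset.mem_filter, Finset.mem_range, and_iff_right_iff_imp]
    intro hi
    by_contra h
    exact hi.ne' (hn i (by omega))
  have hS : S.Nonempty := by obtain ⟨i, hi⟩ := hne; exact ⟨i, (hmem i).2 hi⟩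
  set k := S.min' hS with hk
  set l := S.max' hS with hl
  have hkS : 0 < x k := (hmem _).1 (S.min'_mem hS)
  have hlS : 0 < x l := (hmem _).1 (S.max'_mem hS)
  have hkl : k ≤ l := S.min'_le _ (S.max'_mem hS)
  have hout : ∀ i, ¬ (k ≤ i ∧ i ≤ l) → x i = 0 := by
    intro i hi
    by_contra hxi
    have : i ∈ S := (hmem i).2 (lt_of_le_of_ne (h0 i) (Ne.symm hxi))
    exact hi ⟨S.min'_le _ this, S.le_max' _ this⟩
  have hpos : ∀ d, k + d ≤ l → 0 < x (k+d) := by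
    intro d
    induction d with
    | zero => intro _; exact hkS
    | succ d ih =>
      intro hd
      have hp := ih (by omega)
      by_cases h : k + (d+1) = l
      · rw [h]; exact hlS
      · have := hx (k+d) (l-2) (by omega)
        rw [show l - 2 + 2 = l by omega] at this
        have h3 := lt_of_lt_of_le (mul_pos hp hlS) this
        exact lt_of_le_of_ne (h0 _) fun hh => by
          rw [show k + d + 1 = k + (d+1) by ring, ← hh] at h3
          simp at h3
  have hln : l < n := by
    by_contra h
    exact hlS.ne' (hn l (by omega))
  refine ⟨k, l, hkl, hln, ?_⟩
  by_cases hkl' : k = l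
  · refine ⟨1, x k, one_pos, hkS, ?_, hout⟩
    intro i h1 h2
    have : i = k := by omega
    rw [this]; simp
  · have hk1 : 0 < x (k+1) := hpos 1 (by omega)
    set r := x (k+1) / x k with hr
    have hr0 : 0 < r := div_pos hk1 hkS
    have hstep : ∀ d, k + d + 1 ≤ l → x (k+d+1) = r * x (k+d) := by
      intro d
      induction d with
      | zero => intro _; simp only [add_zero, hr]; field_simp
      | succ d ih =>
        intro hd
        have i1 := ih (by omega)
        have p0 := hpos d (by omega)
        have p2 := hpos (d+2) (by omega)
        have := hb (k+d) p0 p2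
        rw [i1] at this
        have e : x (k + (d+1)) = r * x (k+d) := i1
        have : x (k+d) * x (k+d+2) = x (k+d) * (r * (r * x (k+d))) := by rw [this]; ring
        rw [e]
        exact mul_left_cancel₀ p0.ne' this
    have hform : ∀ d, k + d ≤ l → x (k+d) = x k / r^k * r^(k+d) := by
      intro d
      induction d with
      | zero => intro _; simp only [add_zero]; field_simp
      | succ d ih =>
        intro hd
        rw [← add_assoc, hstep d (by omega), ih (by omega)]; ring
    refine ⟨r, x k / r^k, hr0, by positivity, ?_, hout⟩
    intro i h1 h2
    obtain ⟨d, rfl⟩ := Nat.exists_eq_add_of_le h1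
    exact hform d h2

lemma discrete (n : ℕ) (h g y : ℕ → ℝ) (hy : LCseq y) (hy0 : ∀ i, 0 ≤ y i)
    (hyn : ∀ i, n ≤ i → y i = 0) (hys : 0 < ∑ i ∈ Finset.range n, y i)
    (hyh : 0 ≤ ∑ i ∈ Finset.range n, y i * h i) (hyg : 0 ≤ ∑ i ∈ Finset.range n, y i * g i) :
    ∃ k l, k ≤ l ∧ l < n ∧ ∃ r : ℝ, 0 < r ∧ 0 ≤ ∑ i ∈ Finset.Ico k (l+1), r ^ i * h i ∧
      0 ≤ ∑ i ∈ Finset.Ico k (l+1), r ^ i * g i := by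
  let K : Set (ℕ → ℝ) := {x | ((∀ i, 0 ≤ x i) ∧ (∀ i, n ≤ i → x i = 0) ∧
    ∑ i ∈ Finset.range n, x i = 1) ∧ LCseq x ∧ 0 ≤ ∑ i ∈ Finset.range n, x i * h i}
  have hK : IsCompact K := by
    have hc : IsCompact (Set.univ.pi fun _ : ℕ => Set.Icc (0:ℝ) 1) :=
      isCompact_univ_pi fun _ => isCompact_Icc
    refine hc.of_isClosed_subset ?_ ?_
    · have c1 : IsClosed {x : ℕ → ℝ | ∀ i, 0 ≤ x i} := by
        simp only [Set.ofPred_forall]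
        exact isClosed_iInter fun i => isClosed_le continuous_const (continuous_apply i)
      have c2 : IsClosed {x : ℕ → ℝ | ∀ i, n ≤ i → x i = 0} := by
        simp only [Set.ofPred_forall]
        exact isClosed_iInter fun i => isClosed_iInter fun _ =>
          isClosed_eq (continuous_apply i) continuous_const
      have c3 : IsClosed {x : ℕ → ℝ | ∑ i ∈ Finset.range n, x i = 1} :=
        isClosed_eq (by fun_prop) continuous_const
      have c4 : IsClosed {x : ℕ → ℝ | LCseq x} := by
        simp only [LCseq, Set.ofPred_forall]
        exact isClosed_iInter fun i => isClosed_iInter fun j => isClosed_iInter fun _ =>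
          isClosed_le (by fun_prop) (by fun_prop)
      have c5 : IsClosed {x : ℕ → ℝ | 0 ≤ ∑ i ∈ Finset.range n, x i * h i} :=
        isClosed_le continuous_const (by fun_prop)
      exact (c1.inter (c2.inter c3)).inter (c4.inter c5)
    · rintro x ⟨⟨p1, p2, p3⟩, -⟩ i -
      refine ⟨p1 i, ?_⟩
      by_cases hi : i < n
      · rw [← p3]; exact Finset.single_le_sum (fun j _ => p1 j) (Finset.mem_range.2 hi)
      · rw [p2 i (by omega)]; exact zero_le_one
  set s := ∑ i ∈ Finset.range n, y i with hs
  have hyK : (fun i => y i / s) ∈ K := by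
    refine ⟨⟨fun i => div_nonneg (hy0 i) hys.le, fun i hi => by simp [hyn i hi], ?_⟩, ?_, ?_⟩
    · rw [← Finset.sum_div]; exact div_self hys.ne'
    · intro i j hij
      have := hy i j hij
      simp only [div_mul_div_comm]
      gcongr
    · simp only [div_mul_eq_mul_div]
      rw [← Finset.sum_div]; exact div_nonneg hyh hys.le
  let G : (ℕ → ℝ) → ℝ := fun x => ∑ i ∈ Finset.range n, x i * g i
  have hGc : Continuous G := by fun_prop
  obtain ⟨x₀, hx₀, hmax₀⟩ := hK.exists_isMaxOn ⟨_, hyK⟩ hGc.continuousOn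
  let M : Set (ℕ → ℝ) := K ∩ {x | G x₀ ≤ G x}
  have hM : IsCompact M := hK.inter_right (isClosed_le continuous_const hGc)
  let Q : (ℕ → ℝ) → ℝ := fun x => ∑ i ∈ Finset.range n, x i * x i
  have hQc : Continuous Q := by fun_prop
  obtain ⟨x, ⟨hxK, hxG⟩, hmax⟩ := hM.exists_isMaxOn ⟨x₀, hx₀, le_refl (G x₀)⟩ hQc.continuousOn
  have hxG : G x₀ ≤ G x := hxG
  have hG0 : 0 ≤ G x := by
    refine le_trans ?_ ((hmax₀ hyK : G _ ≤ G x₀).trans hxG)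
    simp only [G, div_mul_eq_mul_div]
    rw [← Finset.sum_div]; exact div_nonneg hyg hys.le
  obtain ⟨⟨hx0, hxn, hx1⟩, hxL, hxh⟩ := hxK
  have hnb : ∀ m, 0 < x m → 0 < x (m+2) → x m * x (m+2) = x (m+1) * x (m+1) := by
    intro m hm hm2
    by_contra hne
    have hlt : x m * x (m+2) < x (m+1) * x (m+1) := lt_of_le_of_ne (hxL m m le_rfl) hne
    have hm1 : 0 < x (m+1) := by
      refine lt_of_le_of_ne (hx0 _) fun hh => ?_
      rw [← hh] at hlt
      nlinarith [mul_pos hm hm2]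
    obtain ⟨a, b, c, w1, w2, i₀, hi₀, w3⟩ := exists_w n x h m hm hm1 hm2
    set w := wfun m a b c with hw
    have hev := perturb n x hxL hx0 hxn m hlt a b c
    have hev' : ∀ᶠ ε in nhds (0:ℝ), (fun i => x i * (1 + ε * w i)) ∈ K := by
      filter_upwards [hev] with ε hε
      refine ⟨⟨hε.1, fun i hi => by simp [hxn i hi], ?_⟩, hε.2, ?_⟩
      · have : ∑ i ∈ Finset.range n, x i * (1 + ε * w i) =
          ∑ i ∈ Finset.range n, x i + ε * ∑ i ∈ Finset.range n, x i * w i := by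
          rw [Finset.mul_sum, ← Finset.sum_add_distrib]
          exact Finset.sum_congr rfl fun i _ => by ring
        rw [this, w1, hx1]; simp
      · have : ∑ i ∈ Finset.range n, x i * (1 + ε * w i) * h i =
          ∑ i ∈ Finset.range n, x i * h i + ε * ∑ i ∈ Finset.range n, x i * w i * h i := by
          rw [Finset.mul_sum, ← Finset.sum_add_distrib]
          exact Finset.sum_congr rfl fun i _ => by ring
        rw [this, w2]; simpa using hxh
    obtain ⟨ε₀, hε₀, hball⟩ := Metric.eventually_nhds_iff.1 hev'
    have hp : (fun i => x i * (1 + (ε₀/2) * w i)) ∈ K := hball (by simp [abs_of_pos hε₀]; linarith)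
    have hq : (fun i => x i * (1 + (-(ε₀/2)) * w i)) ∈ K := hball (by simp [abs_of_pos hε₀]; linarith)
    have hGe : ∀ ε, G (fun i => x i * (1 + ε * w i)) = G x + ε * ∑ i ∈ Finset.range n, x i * w i * g i := by
      intro ε
      simp only [G]
      rw [Finset.mul_sum, ← Finset.sum_add_distrib]
      exact Finset.sum_congr rfl fun i _ => by ring
    have hQe : ∀ ε, Q (fun i => x i * (1 + ε * w i)) = Q x + 2 * ε * ∑ i ∈ Finset.range n, x i * x i * w i
        + ε^2 * ∑ i ∈ Finset.range n, (x i * w i)^2 := by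
      intro ε
      simp only [Q]
      rw [Finset.mul_sum, Finset.mul_sum, ← Finset.sum_add_distrib, ← Finset.sum_add_distrib]
      exact Finset.sum_congr rfl fun i _ => by ring
    have g1 : G _ ≤ G x₀ := hmax₀ hp
    have g2 : G _ ≤ G x₀ := hmax₀ hq
    rw [hGe] at g1 g2
    have hz : ∑ i ∈ Finset.range n, x i * w i * g i = 0 := by
      apply le_antisymm <;> by_contra hh <;> push Not at hh
      · have := mul_pos (half_pos hε₀) hh; linarith
      · have := mul_neg_of_pos_of_neg (half_pos hε₀) hh; linarith
    have q1 : Q _ ≤ Q x := hmax ⟨hp, by simp only [Set.mem_ofPred_eq, hGe, hz]; linarith⟩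
    have q2 : Q _ ≤ Q x := hmax ⟨hq, by simp only [Set.mem_ofPred_eq, hGe, hz]; linarith⟩
    rw [hQe] at q1 q2
    have hi₀n : i₀ < n := by
      by_contra hh
      exact w3 (by rw [hxn i₀ (by omega)]; simp)
    have hp2 : 0 < ∑ i ∈ Finset.range n, (x i * w i)^2 :=
      Finset.sum_pos' (fun i _ => sq_nonneg _) ⟨i₀, Finset.mem_range.2 hi₀n, by positivity⟩
    have := mul_pos (pow_pos (half_pos hε₀) 2) hp2
    nlinarith
  have hne : ∃ i, 0 < x i := by
    by_contra hh
    push Not at hh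
    have : ∑ i ∈ Finset.range n, x i ≤ 0 := Finset.sum_nonpos fun i _ => hh i
    linarith
  obtain ⟨k, l, hkl, hln, r, C, hr, hC, hin, hout⟩ := geom_of_nobreak n x hxL hx0 hxn hne hnb
  have hsum : ∀ φ : ℕ → ℝ, ∑ i ∈ Finset.range n, x i * φ i =
      C * ∑ i ∈ Finset.Ico k (l+1), r ^ i * φ i := by
    intro φ
    rw [Finset.mul_sum, ← Finset.sum_subset (s₁ := Finset.Ico k (l+1))]
    · refine Finset.sum_congr rfl fun i hi => ?_
      rw [Finset.mem_Ico] at hi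
      rw [hin i hi.1 (by omega)]; ring
    · intro i hi
      rw [Finset.mem_Ico] at hi
      exact Finset.mem_range.2 (by omega)
    · intro i _ hi
      rw [Finset.mem_Ico] at hi
      rw [hout i (by omega)]; simp
  refine ⟨k, l, hkl, hln, r, hr, ?_, ?_⟩
  · rw [hsum] at hxh; exact nonneg_of_mul_nonneg_right hxh hC
  · simp only [G] at hG0
    rw [hsum] at hG0; exact nonneg_of_mul_nonneg_right hG0 hC

lemma LC_sample (F : ℝ → ℝ) (hFnn : ∀ t, 0 ≤ F t)
    (hFlc : ∀ x y : ℝ, ∀ t ∈ Set.Icc (0 : ℝ) 1,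
      F x ^ t * F y ^ (1 - t) ≤ F (t * x + (1 - t) * y)) (a m : ℝ) (n : ℕ) :
    LCseq (fun i => if i < n then F (a + i * m) else 0) := by
  intro i j hij
  have hnn : ∀ i : ℕ, 0 ≤ (if i < n then F (a + i * m) else 0) := by
    intro i; split_ifs
    · exact hFnn _
    · exact le_rfl
  by_cases hj : j + 2 < n
  swap
  · simp only [hj, if_false, mul_zero]; exact mul_nonneg (hnn _) (hnn _)
  simp only [hj, show i < n by omega, show i + 1 < n by omega, show j + 1 < n by omega, if_true]
  rcases (hFnn (a + i * m)).eq_or_lt with h1 | h1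
  · rw [← h1, zero_mul]; exact mul_nonneg (hFnn _) (hFnn _)
  rcases (hFnn (a + (j+2 : ℕ) * m)).eq_or_lt with h2 | h2
  · rw [← h2, mul_zero]; exact mul_nonneg (hFnn _) (hFnn _)
  have hij' : (i:ℝ) ≤ j := by exact_mod_cast hij
  set D : ℝ := j + 2 - i with hD
  have hD0 : 0 < D := by rw [hD]; linarith
  have hθ : 1 / D ∈ Set.Icc (0:ℝ) 1 := by
    refine ⟨by positivity, ?_⟩
    rw [div_le_one hD0, hD]; linarith
  have hθ' : 1 - 1 / D ∈ Set.Icc (0:ℝ) 1 := ⟨by linarith [hθ.2], by linarith [hθ.1]⟩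
  have k1 := hFlc (a + i * m) (a + (j+2 : ℕ) * m) _ hθ
  have k2 := hFlc (a + i * m) (a + (j+2 : ℕ) * m) _ hθ'
  have e1 : (1 - 1/D) * (a + i * m) + (1 - (1 - 1/D)) * (a + (j+2 : ℕ) * m) = a + (i+1 : ℕ) * m := by
    have : 1 / D * D = 1 := by field_simp
    push_cast
    have h3 : (j:ℝ) + 2 = i + D := by rw [hD]; ring
    rw [h3]
    linear_combination m * this
  have e2 : (1/D) * (a + i * m) + (1 - 1/D) * (a + (j+2 : ℕ) * m) = a + (j+1 : ℕ) * m := by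
    have : 1 / D * D = 1 := by field_simp
    push_cast
    have h3 : (i:ℝ) = j + 2 - D := by rw [hD]; ring
    rw [h3]
    linear_combination (-m) * this
  rw [e2] at k1
  rw [e1] at k2
  refine le_trans (le_of_eq ?_) (mul_le_mul k2 k1 (by positivity) (hFnn _))
  have r1 := rpow_add h1 (1/D) (1 - 1/D)
  have r2 := rpow_add h2 (1/D) (1 - 1/D)
  rw [add_sub_cancel, rpow_one] at r1 r2
  rw [sub_sub_cancel]
  conv_lhs => rw [r1, r2]
  ring

/-- uniform continuity on a mesh -/
lemma mesh (a b : ℝ) (hab : a < b) (φ : ℝ → ℝ) (hφ : ContinuousOn φ (Set.Icc a b)) (ε : ℝ)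
    (hε : 0 < ε) : ∀ᶠ n : ℕ in Filter.atTop, ∀ s ∈ Set.Icc a b, ∀ t ∈ Set.Icc a b,
      |s - t| ≤ (b - a) / n → |φ s - φ t| ≤ ε := by
  have hu := isCompact_Icc.uniformContinuousOn_of_continuous hφ
  obtain ⟨δ, hδ, H⟩ := Metric.uniformContinuousOn_iff.1 hu ε hε
  have : Filter.Tendsto (fun n : ℕ => (b - a) / (n:ℝ)) Filter.atTop (nhds 0) :=
    tendsto_const_div_atTop_nhds_zero_nat _
  filter_upwards [this.eventually (gt_mem_nhds hδ)] with n hn s hs t ht hst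
  exact (H s hs t ht (by rw [Real.dist_eq]; linarith)).le

lemma cells_mem (a b : ℝ) (hab : a < b) (n : ℕ) (hn : 0 < n) (i : ℕ) (hi : i ≤ n) :
    a + i * ((b - a) / n) ∈ Set.Icc a b := by
  have hn' : (0:ℝ) < n := by exact_mod_cast hn
  have hi' : (i:ℝ) ≤ n := by exact_mod_cast hi
  have hm : 0 < (b - a) / n := div_pos (by linarith) hn'
  have : n * ((b - a) / n) = b - a := by field_simp
  constructor
  · have : 0 ≤ i * ((b - a) / n) := by positivity
    linarith
  · nlinarith

lemma cells_sum (a b : ℝ) (hab : a < b) (n : ℕ) (hn : 0 < n) (ψ : ℝ → ℝ)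
    (hψ : ContinuousOn ψ (Set.Icc a b)) (k l : ℕ) (hkl : k ≤ l) (hl : l ≤ n) :
    ∑ i ∈ Finset.Ico k l, ∫ t in (a + i * ((b - a) / n))..(a + (i+1 : ℕ) * ((b - a) / n)), ψ t =
    ∫ t in (a + k * ((b - a) / n))..(a + l * ((b - a) / n)), ψ t := by
  refine intervalIntegral.sum_integral_adjacent_intervals_Ico (a := fun i : ℕ => a + i * ((b - a) / n)) hkl ?_
  intro i hi
  apply ContinuousOn.intervalIntegrable
  refine hψ.mono (Set.uIcc_subset_Icc ?_ ?_)
  · exact cells_mem a b hab n hn _ (hi.2.le.trans hl)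
  · exact cells_mem a b hab n hn _ (le_trans hi.2 hl)

lemma cell_sub (a b : ℝ) (hab : a < b) (n : ℕ) (hn : 0 < n) (i : ℕ) (hi : i < n) (t : ℝ)
    (ht : t ∈ Set.Icc (a + i * ((b - a) / n)) (a + (i+1 : ℕ) * ((b - a) / n))) :
    t ∈ Set.Icc a b ∧ |t - (a + i * ((b - a) / n))| ≤ (b - a) / n := by
  have h1 := cells_mem a b hab n hn i hi.le
  have h2 := cells_mem a b hab n hn (i+1) hi
  refine ⟨⟨h1.1.trans ht.1, ht.2.trans h2.2⟩, ?_⟩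
  rw [abs_of_nonneg (by linarith [ht.1])]
  have := ht.2
  push_cast at this
  linarith

lemma riemann_pos (a b : ℝ) (hab : a < b) (φ : ℝ → ℝ) (hφ : ContinuousOn φ (Set.Icc a b))
    (hpos : 0 < ∫ t in a..b, φ t) :
    ∀ᶠ n : ℕ in Filter.atTop, 0 < ∑ i ∈ Finset.range n, φ (a + i * ((b - a) / n)) := by
  set I := ∫ t in a..b, φ t with hI
  have hba : 0 < b - a := by linarith
  filter_upwards [mesh a b hab φ hφ (I / (2 * (b - a))) (by positivity), Filter.eventually_gt_atTop 0]
    with n H hn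
  have hn' : (0:ℝ) < n := by exact_mod_cast hn
  set m := (b - a) / n with hm
  have hm0 : 0 < m := div_pos hba hn'
  have hnm : n * m = b - a := by rw [hm]; field_simp
  have hs := cells_sum a b hab n hn φ hφ 0 n (Nat.zero_le _) le_rfl
  rw [← hm] at hs
  have hI' : I = ∑ i ∈ Finset.range n, ∫ t in (a + i * m)..(a + (i+1 : ℕ) * m), φ t := by
    rw [Finset.range_eq_Ico, hs, hI]
    congr 1
    · simp
    · rw [hnm]; ring
  have hcell : ∀ i ∈ Finset.range n, ∫ t in (a + i * m)..(a + (i+1 : ℕ) * m), φ t ≤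
      m * (φ (a + i * m) + I / (2 * (b - a))) := by
    intro i hi
    rw [Finset.mem_range] at hi
    have hle : a + i * m ≤ a + (i+1 : ℕ) * m := by push_cast; linarith
    have hint : IntervalIntegrable φ volume (a + i * m) (a + (i+1 : ℕ) * m) := by
      apply ContinuousOn.intervalIntegrable
      exact hφ.mono (Set.uIcc_subset_Icc (cells_mem a b hab n hn _ hi.le) (cells_mem a b hab n hn _ hi))
    calc _ ≤ ∫ t in (a + i * m)..(a + (i+1 : ℕ) * m), (φ (a + i * m) + I / (2 * (b - a))) := by
          refine intervalIntegral.integral_mono_on hle hint intervalIntegrable_const fun t ht => ?_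
          obtain ⟨q1, q2⟩ := cell_sub a b hab n hn i hi t ht
          have := (abs_le.1 (H t q1 _ (cells_mem a b hab n hn _ hi.le) q2)).2
          linarith
      _ = _ := by rw [intervalIntegral.integral_const, smul_eq_mul]; push_cast; ring
  have hfin := Finset.sum_le_sum hcell
  rw [← hI', ← Finset.mul_sum, Finset.sum_add_distrib, Finset.sum_const, Finset.card_range,
    nsmul_eq_mul, mul_add] at hfin
  have e : m * (n * (I / (2 * (b - a)))) = I / 2 := by
    rw [← mul_assoc, mul_comm m, hnm]; field_simp
  rw [e] at hfin
  by_contra hc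
  push Not at hc
  nlinarith

lemma needle_pos (a b : ℝ) (hab : a < b) (n : ℕ) (hn : 0 < n) (g : ℝ → ℝ)
    (hg : ContinuousOn g (Set.Icc a b)) (η : ℝ) (hη : 0 < η)
    (H : ∀ s ∈ Set.Icc a b, ∀ t ∈ Set.Icc a b, |s - t| ≤ (b - a) / n → |g s - g t| ≤ η / 2)
    (k l : ℕ) (hkl : k ≤ l) (hln : l < n) (r : ℝ) (hr : 0 < r)
    (hs : 0 ≤ ∑ i ∈ Finset.Ico k (l+1), r ^ i * (g (a + i * ((b - a) / n)) - η)) :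
    0 < ∫ t in (a + k * ((b - a) / n))..(a + (l+1 : ℕ) * ((b - a) / n)),
      Real.exp (Real.log r / ((b - a) / n) * t) * g t := by
  have hn' : (0:ℝ) < n := by exact_mod_cast hn
  set m := (b - a) / n with hm
  have hm0 : 0 < m := div_pos (by linarith) hn'
  set δ := Real.log r / m with hδ
  have hec : Continuous fun t : ℝ => Real.exp (δ * t) := by fun_prop
  have hψ : ContinuousOn (fun t => Real.exp (δ * t) * g t) (Set.Icc a b) := hec.continuousOn.mul hg
  have hcs := cells_sum a b hab n hn _ hψ k (l+1) (by omega) hln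
  rw [← hm] at hcs
  rw [← hcs]
  set C := ∫ t in (0:ℝ)..m, Real.exp (δ * (a + t)) with hC
  have hC0 : 0 < C := by
    refine intervalIntegral.intervalIntegral_pos_of_pos (Continuous.intervalIntegrable (by fun_prop) _ _) (fun t => Real.exp_pos _) hm0
  have hCi : ∀ i : ℕ, ∫ t in (a + i * m)..(a + (i+1 : ℕ) * m), Real.exp (δ * t) = C * r ^ i := by
    intro i
    have h1 := intervalIntegral.integral_comp_add_right (a := 0) (b := m) (fun t => Real.exp (δ * t)) (a + i * m)
    rw [zero_add, show m + (a + i * m) = a + (i+1 : ℕ) * m by push_cast; ring] at h1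
    rw [← h1, hC, ← intervalIntegral.integral_mul_const]
    congr 1
    ext t
    have : r ^ i = Real.exp (δ * (i * m)) := by
      rw [hδ, show Real.log r / m * (i * m) = i * Real.log r by field_simp, Real.exp_nat_mul, Real.exp_log hr]
    rw [this, ← Real.exp_add]
    congr 1; ring
  have hcell : ∀ i ∈ Finset.Ico k (l+1), C * (r ^ i * (g (a + i * m) - η)) <
      ∫ t in (a + i * m)..(a + (i+1 : ℕ) * m), Real.exp (δ * t) * g t := by
    intro i hi
    rw [Finset.mem_Ico] at hi
    have hin : i < n := by omega
    have hle : a + i * m ≤ a + (i+1 : ℕ) * m := by push_cast; linarith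
    have hint : IntervalIntegrable (fun t => Real.exp (δ * t) * g t) volume (a + i * m) (a + (i+1 : ℕ) * m) := by
      apply ContinuousOn.intervalIntegrable
      exact hψ.mono (Set.uIcc_subset_Icc (cells_mem a b hab n hn _ hin.le) (cells_mem a b hab n hn _ hin))
    calc C * (r ^ i * (g (a + i * m) - η)) < C * r ^ i * (g (a + i * m) - η / 2) := by
          have : 0 < C * r ^ i := by positivity
          nlinarith
      _ = ∫ t in (a + i * m)..(a + (i+1 : ℕ) * m), Real.exp (δ * t) * (g (a + i * m) - η / 2) := by
          rw [intervalIntegral.integral_mul_const, hCi]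
      _ ≤ _ := by
          refine intervalIntegral.integral_mono_on hle (Continuous.intervalIntegrable (by fun_prop) _ _) hint fun t ht => ?_
          obtain ⟨q1, q2⟩ := cell_sub a b hab n hn i hin t ht
          have := (abs_le.1 (H t q1 _ (cells_mem a b hab n hn _ hin.le) q2)).1
          exact mul_le_mul_of_nonneg_left (by linarith) (Real.exp_pos _).le
  have hlt := Finset.sum_lt_sum_of_nonempty ⟨k, Finset.mem_Ico.2 ⟨le_rfl, by omega⟩⟩ hcell
  rw [← Finset.mul_sum] at hlt
  exact lt_of_le_of_lt (mul_nonneg hC0.le hs) hlt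

lemma localization (a b : ℝ) (hab : a < b) (F : ℝ → ℝ) (hFnn : ∀ t, 0 ≤ F t) (hFcont : Continuous F)
    (hFlc : ∀ x y : ℝ, ∀ t ∈ Set.Icc (0 : ℝ) 1,
      F x ^ t * F y ^ (1 - t) ≤ F (t * x + (1 - t) * y)) (g h : ℝ → ℝ)
    (hg : ContinuousOn g (Set.Icc a b)) (hh : ContinuousOn h (Set.Icc a b))
    (Ig : 0 < ∫ t in a..b, F t * g t) (Ih : 0 < ∫ t in a..b, F t * h t) :
    ∃ c d δ : ℝ, a ≤ c ∧ c ≤ d ∧ d ≤ b ∧ 0 < (∫ t in c..d, Real.exp (δ * t) * g t) ∧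
      0 < ∫ t in c..d, Real.exp (δ * t) * h t := by
  have hS : 0 ≤ ∫ t in a..b, F t := intervalIntegral.integral_nonneg hab.le fun t _ => hFnn t
  set S := ∫ t in a..b, F t with hSd
  obtain ⟨η, hη, hη1, hη2⟩ : ∃ η : ℝ, 0 < η ∧ η * S < (∫ t in a..b, F t * g t) ∧
      η * S < ∫ t in a..b, F t * h t := by
    refine ⟨min (∫ t in a..b, F t * g t) (∫ t in a..b, F t * h t) / (S + 1), by positivity, ?_, ?_⟩
    all_goals
      rw [div_mul_eq_mul_div, div_lt_iff₀ (by positivity)]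
      nlinarith [min_le_left (∫ t in a..b, F t * g t) (∫ t in a..b, F t * h t),
        min_le_right (∫ t in a..b, F t * g t) (∫ t in a..b, F t * h t), lt_min Ig Ih]
  have key : ∀ φ : ℝ → ℝ, ContinuousOn φ (Set.Icc a b) → η * S < (∫ t in a..b, F t * φ t) →
      ∀ᶠ n : ℕ in Filter.atTop, 0 < ∑ i ∈ Finset.range n,
        F (a + i * ((b - a) / n)) * (φ (a + i * ((b - a) / n)) - η) := by
    intro φ hφ hI
    refine riemann_pos a b hab (fun t => F t * (φ t - η))
      (hFcont.continuousOn.mul (hφ.sub continuousOn_const)) ?_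
    have i1 : IntervalIntegrable (fun t => F t * φ t) volume a b := by
      apply ContinuousOn.intervalIntegrable
      rw [Set.uIcc_of_le hab.le]
      exact hFcont.continuousOn.mul hφ
    have i2 : IntervalIntegrable (fun t => η * F t) volume a b :=
      Continuous.intervalIntegrable (by fun_prop) _ _
    have : ∫ t in a..b, F t * (φ t - η) = (∫ t in a..b, F t * φ t) - η * S := by
      rw [hSd, ← intervalIntegral.integral_const_mul, ← intervalIntegral.integral_sub i1 i2]
      congr 1; ext t; ring
    rw [this]; linarith
  obtain ⟨n, r1, r2, m1, m2, hn⟩ := ((key g hg hη1).and ((key h hh hη2).and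
    ((mesh a b hab g hg (η/2) (by positivity)).and ((mesh a b hab h hh (η/2) (by positivity)).and
      (Filter.eventually_gt_atTop 0))))).exists
  set m := (b - a) / n with hm
  let y : ℕ → ℝ := fun i => if i < n then F (a + i * m) else 0
  have hy0 : ∀ i, 0 ≤ y i := by
    intro i; simp only [y]; split_ifs
    · exact hFnn _
    · exact le_rfl
  have hyn : ∀ i, n ≤ i → y i = 0 := fun i hi => by simp [y, not_lt.2 hi]
  have hsum : ∀ φ : ℕ → ℝ, ∑ i ∈ Finset.range n, y i * φ i = ∑ i ∈ Finset.range n, F (a + i * m) * φ i := by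
    intro φ
    refine Finset.sum_congr rfl fun i hi => ?_
    simp [y, Finset.mem_range.1 hi]
  rw [← hsum fun i => g (a + i * m) - η] at r1
  rw [← hsum fun i => h (a + i * m) - η] at r2
  have hys : 0 < ∑ i ∈ Finset.range n, y i := by
    refine lt_of_le_of_ne (Finset.sum_nonneg fun i _ => hy0 i) fun h0 => ?_
    have hz := (Finset.sum_eq_zero_iff_of_nonneg fun i _ => hy0 i).1 h0.symm
    rw [Finset.sum_eq_zero fun i hi => by rw [hz i hi, zero_mul]] at r1
    exact lt_irrefl _ r1
  obtain ⟨k, l, hkl, hln, r, hr, s1, s2⟩ := discrete n (fun i => g (a + i * m) - η)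
    (fun i => h (a + i * m) - η) y (LC_sample F hFnn hFlc a m n) hy0 hyn hys r1.le r2.le
  have hm0 : 0 < m := div_pos (by linarith) (by exact_mod_cast hn)
  refine ⟨a + k * m, a + (l+1 : ℕ) * m, Real.log r / m, (cells_mem a b hab n hn k (by omega)).1, ?_,
    (cells_mem a b hab n hn (l+1) (by omega)).2,
    needle_pos a b hab n hn g hg η hη m1 k l hkl hln r hr s1,
    needle_pos a b hab n hn h hh η hη m2 k l hkl hln r hr s2⟩
  have : (k:ℝ) ≤ (l+1 : ℕ) := by exact_mod_cast (by omega : k ≤ l + 1)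
  have := mul_le_mul_of_nonneg_right this hm0.le
  linarith

/-- KLS reduction from log-concave weights to exponential weights: if the four-function
inequality holds with weight `e^{δt}` on every subinterval, it holds with any
log-concave weight `F`. -/
theorem stmt_9 (a b : ℝ) (hab : a ≤ b) (α β : ℝ) (hα : 0 < α) (hβ : 0 < β)
    (f₁ f₂ f₃ f₄ : ℝ → ℝ)
    (hnn : ∀ i ∈ [f₁, f₂, f₃, f₄], ∀ t ∈ Set.Icc a b, 0 ≤ i t)
    (hcont : ∀ i ∈ [f₁, f₂, f₃, f₄], ContinuousOn i (Set.Icc a b))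
    (F : ℝ → ℝ) (hFnn : ∀ t, 0 ≤ F t) (hFcont : Continuous F)
    (hFlc : ∀ x y : ℝ, ∀ t ∈ Set.Icc (0 : ℝ) 1,
      F x ^ t * F y ^ (1 - t) ≤ F (t * x + (1 - t) * y))
    (hexp : ∀ a' b' : ℝ, a ≤ a' → a' ≤ b' → b' ≤ b → ∀ δ : ℝ,
      (∫ t in a'..b', Real.exp (δ * t) * f₁ t) ^ α *
        (∫ t in a'..b', Real.exp (δ * t) * f₂ t) ^ β ≤
      (∫ t in a'..b', Real.exp (δ * t) * f₃ t) ^ α *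
        (∫ t in a'..b', Real.exp (δ * t) * f₄ t) ^ β) :
    (∫ t in a..b, F t * f₁ t) ^ α * (∫ t in a..b, F t * f₂ t) ^ β ≤
      (∫ t in a..b, F t * f₃ t) ^ α * (∫ t in a..b, F t * f₄ t) ^ β := by
  by_contra hcon
  push Not at hcon
  have n1 := hnn f₁ (by simp)
  have n2 := hnn f₂ (by simp)
  have n3 := hnn f₃ (by simp)
  have n4 := hnn f₄ (by simp)
  have c1 := hcont f₁ (by simp)
  have c2 := hcont f₂ (by simp)
  have c3 := hcont f₃ (by simp)
  have c4 := hcont f₄ (by simp)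
  have hnnI : ∀ f : ℝ → ℝ, (∀ t ∈ Set.Icc a b, 0 ≤ f t) → 0 ≤ ∫ t in a..b, F t * f t :=
    fun f hf => intervalIntegral.integral_nonneg hab fun t ht => mul_nonneg (hFnn t) (hf t ht)
  have hint : ∀ f : ℝ → ℝ, ContinuousOn f (Set.Icc a b) →
      IntervalIntegrable (fun t => F t * f t) volume a b := by
    intro f hf
    apply ContinuousOn.intervalIntegrable
    rw [Set.uIcc_of_le hab]
    exact hFcont.continuousOn.mul hf
  have j1 := hnnI f₁ n1
  have j2 := hnnI f₂ n2
  have j3 := hnnI f₃ n3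
  have j4 := hnnI f₄ n4
  have i1 := hint f₁ c1
  have i2 := hint f₂ c2
  have i3 := hint f₃ c3
  have i4 := hint f₄ c4
  have hab' : a < b := by
    refine lt_of_le_of_ne hab fun h => ?_
    subst h
    simp [hα.ne'] at hcon
  have hloc := localization a b hab' F hFnn hFcont hFlc
  set I₁ := ∫ t in a..b, F t * f₁ t with hI₁
  set I₂ := ∫ t in a..b, F t * f₂ t with hI₂
  set I₃ := ∫ t in a..b, F t * f₃ t with hI₃
  set I₄ := ∫ t in a..b, F t * f₄ t with hI₄
  have hr0 : 0 ≤ I₃ ^ α * I₄ ^ β := by positivity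
  have p1 : 0 < I₁ := by
    refine lt_of_le_of_ne j1 fun h => ?_
    rw [← h, Real.zero_rpow hα.ne', zero_mul] at hcon
    linarith
  have p2 : 0 < I₂ := by
    refine lt_of_le_of_ne j2 fun h => ?_
    rw [← h, Real.zero_rpow hβ.ne', mul_zero] at hcon
    linarith
  obtain ⟨ρ, hρ, hρ1, hρ2, hρ3⟩ : ∃ ρ : ℝ, 0 < ρ ∧ ρ < I₁ ∧ ρ < I₂ ∧
      (I₃ + ρ) ^ α * (I₄ + ρ) ^ β < (I₁ - ρ) ^ α * (I₂ - ρ) ^ β := by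
    have cl : Continuous fun ρ : ℝ => (I₃ + ρ) ^ α * (I₄ + ρ) ^ β :=
      ((continuous_const.add continuous_id).rpow_const fun _ => Or.inr hα.le).mul
        ((continuous_const.add continuous_id).rpow_const fun _ => Or.inr hβ.le)
    have cr : Continuous fun ρ : ℝ => (I₁ - ρ) ^ α * (I₂ - ρ) ^ β :=
      ((continuous_const.sub continuous_id).rpow_const fun _ => Or.inr hα.le).mul
        ((continuous_const.sub continuous_id).rpow_const fun _ => Or.inr hβ.le)
    have ev : ∀ᶠ ρ in nhds (0:ℝ), (I₃ + ρ) ^ α * (I₄ + ρ) ^ β < (I₁ - ρ) ^ α * (I₂ - ρ) ^ β :=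
      cl.continuousAt.eventually_lt cr.continuousAt (by simpa using hcon)
    have ev2 := ((gt_mem_nhds p1).and ((gt_mem_nhds p2).and ev))
    have ev3 := (ev2.filter_mono (nhdsWithin_le_nhds (s := Set.Ioi 0))).and self_mem_nhdsWithin
    obtain ⟨ρ, ⟨q1, q2, q3⟩, q4⟩ := ev3.exists
    exact ⟨ρ, q4, q1, q2, q3⟩
  have hA1 : 0 < I₁ - ρ := by linarith
  have hA2 : 0 < I₂ - ρ := by linarith
  have hB3 : 0 < I₃ + ρ := by linarith
  have hB4 : 0 < I₄ + ρ := by linarith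
  set lam := (I₁ - ρ) / (I₃ + ρ) with hlam
  set mu := (I₂ - ρ) / (I₄ + ρ) with hmu
  have hlam0 : 0 < lam := div_pos hA1 hB3
  have hmu0 : 0 < mu := div_pos hA2 hB4
  have hlm : 1 ≤ lam ^ α * mu ^ β := by
    rw [hlam, hmu, Real.div_rpow hA1.le hB3.le, Real.div_rpow hA2.le hB4.le, div_mul_div_comm,
      one_le_div (by positivity)]
    exact hρ3.le
  have l1 : lam * (I₃ + ρ) = I₁ - ρ := by rw [hlam]; field_simp
  have l2 : mu * (I₄ + ρ) = I₂ - ρ := by rw [hmu]; field_simp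
  have g1 : 0 < ∫ t in a..b, F t * (f₁ t - lam * f₃ t) := by
    have : ∫ t in a..b, F t * (f₁ t - lam * f₃ t) = I₁ - lam * I₃ := by
      rw [hI₁, hI₃, ← intervalIntegral.integral_const_mul,
        ← intervalIntegral.integral_sub i1 (i3.const_mul lam)]
      congr 1; ext t; ring
    rw [this]; nlinarith
  have g2 : 0 < ∫ t in a..b, F t * (f₂ t - mu * f₄ t) := by
    have : ∫ t in a..b, F t * (f₂ t - mu * f₄ t) = I₂ - mu * I₄ := by
      rw [hI₂, hI₄, ← intervalIntegral.integral_const_mul,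
        ← intervalIntegral.integral_sub i2 (i4.const_mul mu)]
      congr 1; ext t; ring
    rw [this]; nlinarith
  obtain ⟨c, d, δ, hac, hcd, hdb, e1, e2⟩ := hloc _ _ (c1.sub (c3.const_smul lam))
    (c2.sub (c4.const_smul mu)) g1 g2
  have hsub : Set.Icc c d ⊆ Set.Icc a b := Set.Icc_subset_Icc hac hdb
  have eint : ∀ f : ℝ → ℝ, ContinuousOn f (Set.Icc a b) →
      IntervalIntegrable (fun t => Real.exp (δ * t) * f t) volume c d := by
    intro f hf
    apply ContinuousOn.intervalIntegrable
    rw [Set.uIcc_of_le hcd]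
    have : Continuous fun t : ℝ => Real.exp (δ * t) := by fun_prop
    exact this.continuousOn.mul (hf.mono hsub)
  have enn : ∀ f : ℝ → ℝ, (∀ t ∈ Set.Icc a b, 0 ≤ f t) → 0 ≤ ∫ t in c..d, Real.exp (δ * t) * f t :=
    fun f hf => intervalIntegral.integral_nonneg hcd fun t ht =>
      mul_nonneg (Real.exp_pos _).le (hf t (hsub ht))
  have hfin := hexp c d hac hcd hdb δ
  have t1 : ∫ t in c..d, Real.exp (δ * t) * (f₁ t - lam * f₃ t) =
      (∫ t in c..d, Real.exp (δ * t) * f₁ t) - lam * ∫ t in c..d, Real.exp (δ * t) * f₃ t := by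
    rw [← intervalIntegral.integral_const_mul,
        ← intervalIntegral.integral_sub (eint _ c1) ((eint _ c3).const_mul lam)]
    congr 1; ext t; ring
  have t2 : ∫ t in c..d, Real.exp (δ * t) * (f₂ t - mu * f₄ t) =
      (∫ t in c..d, Real.exp (δ * t) * f₂ t) - mu * ∫ t in c..d, Real.exp (δ * t) * f₄ t := by
    rw [← intervalIntegral.integral_const_mul,
        ← intervalIntegral.integral_sub (eint _ c2) ((eint _ c4).const_mul mu)]
    congr 1; ext t; ring
  have e1' := t1 ▸ (show 0 < ∫ t in c..d, Real.exp (δ * t) * (f₁ t - lam * f₃ t) from e1)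
  have e2' := t2 ▸ (show 0 < ∫ t in c..d, Real.exp (δ * t) * (f₂ t - mu * f₄ t) from e2)
  have x3 := enn f₃ n3
  have x4 := enn f₄ n4
  set E₁ := ∫ t in c..d, Real.exp (δ * t) * f₁ t
  set E₂ := ∫ t in c..d, Real.exp (δ * t) * f₂ t
  set E₃ := ∫ t in c..d, Real.exp (δ * t) * f₃ t
  set E₄ := ∫ t in c..d, Real.exp (δ * t) * f₄ t
  have s1 : (lam * E₃) ^ α < E₁ ^ α := Real.rpow_lt_rpow (by positivity) (by linarith) hα
  have s2 : (mu * E₄) ^ β < E₂ ^ β := Real.rpow_lt_rpow (by positivity) (by linarith) hβ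
  have s3 : (lam * E₃) ^ α * (mu * E₄) ^ β < E₁ ^ α * E₂ ^ β :=
    mul_lt_mul'' s1 s2 (by positivity) (by positivity)
  rw [Real.mul_rpow hlam0.le x3, Real.mul_rpow hmu0.le x4] at s3
  have s4 : 0 ≤ E₃ ^ α * E₄ ^ β := by positivity
  have s5 := mul_le_mul_of_nonneg_right hlm s4
  nlinarith
end

section
/- Let μ be a probability measure on ℝ with log-concave density e^{-ψ} (ψ convex) supported on an interval, let K₁, K₂, K₃ be a measurable partition of the support with dist(K₁, K₃) ≥ ε, and let m = ∫ |x - u| dμ(x) for some fixed u in the support. Then (m/(ε·log 2))·μ(K₂) ≥ μ(K₁)·μ(K₃). -/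
open MeasureTheory Real Set



lemma aux_entropy_one (t : ℝ) (ht : 0 < t) (ht1 : t ≤ 1) :
    (t + 1/t) * Real.log (1 + t^2) - 2 * t * Real.log t ≤ 2 * Real.log 2 := by
  have hd : ∀ x : ℝ, 0 < x → HasDerivAt
      (fun t : ℝ => (t + 1/t) * Real.log (1 + t^2) - 2 * t * Real.log t)
      ((1 - 1/x^2) * Real.log (1 + x^2) - 2 * Real.log x) x := by
    intro x hx
    have h1 : HasDerivAt (fun t : ℝ => t + 1/t) (1 + -(x^2)⁻¹) x := by
      simpa only [one_div] using (hasDerivAt_id' x).fun_add (hasDerivAt_inv hx.ne')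
    have h2 : HasDerivAt (fun t : ℝ => Real.log (1 + t^2)) ((2 * x) / (1 + x^2)) x := by
      have : HasDerivAt (fun t : ℝ => 1 + t^2) (2 * x) x := by
        simpa using (hasDerivAt_pow 2 x).const_add 1
      exact this.log (by positivity)
    have h3 : HasDerivAt (fun t : ℝ => 2 * t * Real.log t) (2 * Real.log x + 2 * x * x⁻¹) x := by
      have h4 : HasDerivAt (fun t : ℝ => 2 * t) 2 x := by
        simpa using (hasDerivAt_id x).const_mul 2
      exact h4.mul (Real.hasDerivAt_log hx.ne')
    refine ((h1.mul h2).sub h3).congr_deriv ?_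
    have : (1 + x^2) ≠ 0 := by positivity
    field_simp
    ring
  have hmono : MonotoneOn (fun t : ℝ => (t + 1/t) * Real.log (1 + t^2) - 2 * t * Real.log t)
      (Ioc 0 1) := by
    apply monotoneOn_of_deriv_nonneg (convex_Ioc 0 1)
    · intro x hx
      exact (hd x hx.1).continuousAt.continuousWithinAt
    · intro x hx
      rw [interior_Ioc] at hx
      exact (hd x hx.1).differentiableAt.differentiableWithinAt
    · intro x hx
      rw [interior_Ioc] at hx
      rw [(hd x hx.1).deriv]
      have hx0 := hx.1
      have h1 : Real.log (1 + x^2) ≤ x^2 := by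
        have := Real.log_le_sub_one_of_pos (show 0 < 1 + x^2 by positivity)
        linarith
      have h2 : 2 * Real.log x ≤ x^2 - 1 := by
        have := Real.log_le_sub_one_of_pos (show 0 < x^2 by positivity)
        rw [Real.log_pow] at this
        exact_mod_cast this
      have h3 : 0 ≤ 1/x^2 - 1 := by
        rw [sub_nonneg, le_div_iff₀ (by positivity)]
        nlinarith [hx.2]
      have h4 : (1/x^2 - 1) * Real.log (1 + x^2) ≤ (1/x^2 - 1) * x^2 :=
        mul_le_mul_of_nonneg_left h1 h3
      have h5 : (1/x^2 - 1) * x^2 = 1 - x^2 := by field_simp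
      nlinarith
  have := hmono ⟨ht, ht1⟩ (show (1:ℝ) ∈ Ioc (0:ℝ) 1 by simp) ht1
  norm_num at this
  simpa [one_div] using this

lemma aux_entropy_le (a b : ℝ) (ha : 0 < a) (hb : 0 < b) (hab : a ≤ b) :
    (a^2 + b^2) * Real.log (a^2 + b^2) - 2 * a^2 * Real.log a - 2 * b^2 * Real.log b
      ≤ 2 * a * b * Real.log 2 := by
  have h := aux_entropy_one (a/b) (by positivity) ((div_le_one hb).2 hab)
  have e1 : 1 + (a/b)^2 = (a^2+b^2)/b^2 := by field_simp; ring
  rw [e1, Real.log_div (by positivity) (by positivity), Real.log_div ha.ne' hb.ne', Real.log_pow] at h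
  have h2 := mul_le_mul_of_nonneg_left h (show 0 ≤ a * b by positivity)
  push_cast at h2
  have e : a * b * ((a / b + 1 / (a / b)) * (Real.log (a ^ 2 + b ^ 2) - 2 * Real.log b) -
      2 * (a / b) * (Real.log a - Real.log b)) =
      (a^2 + b^2) * Real.log (a^2 + b^2) - 2 * a^2 * Real.log a - 2 * b^2 * Real.log b := by
    field_simp
    ring
  rw [e] at h2
  linarith

lemma aux_entropy (a b : ℝ) (ha : 0 < a) (hb : 0 < b) :
    (a^2 + b^2) * Real.log (a^2 + b^2) - 2 * a^2 * Real.log a - 2 * b^2 * Real.log b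
      ≤ 2 * a * b * Real.log 2 := by
  rcases le_total a b with h | h
  · exact aux_entropy_le a b ha hb h
  · have := aux_entropy_le b a hb ha h
    rw [add_comm (b^2)] at this
    linarith

lemma aux_phi (A B v : ℝ) (hA : 0 < A) (hB : 0 < B) (hv0 : 0 ≤ v) (hv1 : v ≤ 1) :
    Real.log 2 * (v * (1 - v)) * (B - A)^2 ≤
      (A * (1 - v) + B * v) * (B * Real.log B + A * Real.log A
        - (A + B) * Real.log ((A + B) / 2)) := by
  obtain ⟨a, ha, rfl⟩ : ∃ a : ℝ, 0 < a ∧ A = a^2 :=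
    ⟨Real.sqrt A, Real.sqrt_pos.2 hA, (Real.sq_sqrt hA.le).symm⟩
  obtain ⟨b, hb, rfl⟩ : ∃ b : ℝ, 0 < b ∧ B = b^2 :=
    ⟨Real.sqrt B, Real.sqrt_pos.2 hB, (Real.sq_sqrt hB.le).symm⟩
  have h := aux_entropy a b ha hb
  rw [Real.log_div (by positivity) (by norm_num), Real.log_pow, Real.log_pow]
  push_cast
  have hl : 0 < Real.log 2 := Real.log_pos (by norm_num)
  have h1 : Real.log 2 * (b - a)^2 ≤ (b^2 * (2 * Real.log b) + a^2 * (2 * Real.log a)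
        - (a^2 + b^2) * (Real.log (a^2 + b^2) - Real.log 2)) := by nlinarith
  have h0 : 0 ≤ a^2 * (1 - v) + b^2 * v := by
    have : 0 ≤ 1 - v := by linarith
    positivity
  have h2 := mul_le_mul_of_nonneg_left h1 h0
  refine le_trans ?_ h2
  have h3 : v * (1 - v) * (a + b)^2 ≤ a^2 * (1 - v) + b^2 * v := by
    nlinarith [sq_nonneg (a * (1 - v) - b * v)]
  have h4 := mul_le_mul_of_nonneg_right h3 (show 0 ≤ Real.log 2 * (b-a)^2 by positivity)
  refine le_trans (le_of_eq ?_) h4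
  ring


lemma aux_upper (I : Set ℝ) (hI : Convex ℝ I) (hIm : MeasurableSet I) (ψ : ℝ → ℝ)
    (hψ : ConvexOn ℝ I ψ) (hint : IntegrableOn (fun x => Real.exp (-ψ x)) I)
    (u : ℝ) (hu : u ∈ I) :
    IntegrableOn (fun x => |x - u| * Real.exp (-ψ x)) (I ∩ Ici u) := by
  have hm : MeasurableSet (I ∩ Ici u) := hIm.inter measurableSet_Ici
  have hint' : IntegrableOn (fun x => Real.exp (-ψ x)) (I ∩ Ici u) :=
    hint.mono_set inter_subset_left
  have hmeas : AEStronglyMeasurable (fun x => |x - u| * Real.exp (-ψ x))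
      (volume.restrict (I ∩ Ici u)) :=
    (Continuous.aestronglyMeasurable (by fun_prop)).mul hint'.aestronglyMeasurable
  by_cases hy : ∃ y ∈ I, u < y ∧ ψ u < ψ y
  · obtain ⟨y, hyI, huy, hlt⟩ := hy
    set γ := (ψ y - ψ u) / (y - u) with hγ
    have hyu : 0 < y - u := by linarith
    have hγ0 : 0 < γ := div_pos (by linarith) hyu
    have hdom : IntegrableOn (fun x => (y - u) * Real.exp (-ψ x) +
        (Real.exp (-ψ u) * (2 / γ) * Real.exp (γ/2 * u)) * Real.exp (-(γ/2) * x)) (I ∩ Ici u) := by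
      apply Integrable.add
      · exact hint'.const_mul _
      · apply Integrable.const_mul
        have := integrableOn_exp_mul_Ioi (a := -(γ/2)) (by linarith) u
        rw [← integrableOn_Ici_iff_integrableOn_Ioi] at this
        exact this.mono_set inter_subset_right
    refine Integrable.mono' hdom hmeas ?_
    rw [ae_restrict_iff' hm]
    refine Filter.Eventually.of_forall ?_
    rintro x ⟨hxI, hxu⟩
    have hxu' : 0 ≤ x - u := sub_nonneg.2 hxu
    rw [Real.norm_eq_abs, abs_mul, abs_abs, abs_of_nonneg hxu', Real.abs_exp]
    have hE : (Real.exp (-ψ u) * (2 / γ) * Real.exp (γ/2 * u)) * Real.exp (-(γ/2) * x)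
      = (2/γ) * (Real.exp (-ψ u) * Real.exp (-(γ/2 * (x - u)))) := by
      rw [show -(γ/2 * (x-u)) = γ/2*u + -(γ/2) * x by ring, Real.exp_add]; ring
    rw [hE]
    rcases le_or_gt x y with hxy | hxy
    · have : (x - u) * Real.exp (-ψ x) ≤ (y - u) * Real.exp (-ψ x) := by gcongr
      have h2 : 0 ≤ (2/γ) * (Real.exp (-ψ u) * Real.exp (-(γ/2 * (x - u)))) := by positivity
      linarith
    · have hs := hψ.slope_mono_adjacent hu hxI huy hxy
      have h1 : ψ u + γ * (x - u) ≤ ψ x := by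
        rw [← hγ, le_div_iff₀ (by linarith)] at hs
        have : γ * (y - u) = ψ y - ψ u := by rw [hγ]; field_simp
        nlinarith
      have h2 : Real.exp (-ψ x) ≤ Real.exp (-ψ u) * Real.exp (-(γ * (x - u))) := by
        rw [← Real.exp_add]; apply Real.exp_le_exp.2; linarith
      have h3 : (x - u) ≤ (2/γ) * Real.exp (γ/2 * (x-u)) := by
        have := Real.add_one_le_exp (γ/2 * (x-u))
        have h4 : (2/γ) * (γ/2*(x-u)) ≤ (2/γ) * Real.exp (γ/2 * (x-u)) := by gcongr; linarith
        have h5 : (2/γ) * (γ/2*(x-u)) = x - u := by field_simp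
        linarith
      have h4 : (x - u) * Real.exp (-ψ x) ≤ (2/γ) * Real.exp (γ/2 * (x-u)) *
          (Real.exp (-ψ u) * Real.exp (-(γ * (x - u)))) := by gcongr
      have h5 : (2/γ) * Real.exp (γ/2 * (x-u)) *
          (Real.exp (-ψ u) * Real.exp (-(γ * (x - u)))) =
          (2/γ) * (Real.exp (-ψ u) * Real.exp (-(γ/2 * (x - u)))) := by
        rw [show -(γ/2 * (x-u)) = γ/2*(x-u) + -(γ * (x-u)) by ring, Real.exp_add (γ/2*(x-u))]; ring
      have h6 : 0 ≤ (y - u) * Real.exp (-ψ x) := by positivity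
      linarith
  · push Not at hy
    have hbdd : BddAbove I := by
      by_contra hnb
      have hsub : Ioi u ⊆ I := by
        intro x hx
        rw [not_bddAbove_iff] at hnb
        obtain ⟨z, hz, hxz⟩ := hnb x
        exact hI.ordConnected.out hu hz ⟨le_of_lt hx, hxz.le⟩
      have hi : IntegrableOn (fun _ : ℝ => Real.exp (-ψ u)) (Ioi u) := by
        refine Integrable.mono' (hint.mono_set hsub) (by fun_prop) ?_
        rw [ae_restrict_iff' measurableSet_Ioi]
        refine Filter.Eventually.of_forall fun x hx => ?_
        rw [Real.norm_eq_abs, Real.abs_exp]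
        exact Real.exp_le_exp.2 (neg_le_neg (hy x (hsub hx) hx))
      rw [integrableOn_const_iff] at hi
      simp [Real.exp_ne_zero] at hi
    obtain ⟨c, hc⟩ := hbdd
    refine Integrable.mono' (hint'.const_mul (c - u)) hmeas ?_
    rw [ae_restrict_iff' hm]
    refine Filter.Eventually.of_forall ?_
    rintro x ⟨hxI, hxu⟩
    have hxu' : 0 ≤ x - u := sub_nonneg.2 hxu
    rw [Real.norm_eq_abs, abs_mul, abs_abs, abs_of_nonneg hxu', Real.abs_exp]
    have := hc hxI
    gcongr

lemma aux_integrable (I : Set ℝ) (hI : Convex ℝ I) (hIm : MeasurableSet I) (ψ : ℝ → ℝ)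
    (hψ : ConvexOn ℝ I ψ) (hint : IntegrableOn (fun x => Real.exp (-ψ x)) I)
    (u : ℝ) (hu : u ∈ I) :
    IntegrableOn (fun x => |x - u| * Real.exp (-ψ x)) I := by
  have h1 := aux_upper I hI hIm ψ hψ hint u hu
  have hconv : ConvexOn ℝ (-I) (fun x => ψ (-x)) := by
    refine ⟨hI.neg, ?_⟩
    intro x hx y hy a b ha hb hab
    have := hψ.2 hx hy ha hb hab
    simp only [smul_eq_mul] at this ⊢
    rw [show -(a * x + b * y) = a * -x + b * -y by ring]
    exact this
  have h2 := aux_upper (-I) hI.neg hIm.neg (fun x => ψ (-x)) hconv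
    (by
      have := (Measure.measurePreserving_neg (volume : Measure ℝ)).integrableOn_comp_preimage
        (MeasurableEquiv.neg ℝ).measurableEmbedding (f := fun x => Real.exp (-ψ x)) (s := I)
      exact this.2 hint) (-u) (by simpa using hu)
  have h3 : IntegrableOn (fun x => |x - u| * Real.exp (-ψ x)) (I ∩ Iic u) := by
    have := (Measure.measurePreserving_neg (volume : Measure ℝ)).integrableOn_comp_preimage
        (MeasurableEquiv.neg ℝ).measurableEmbedding (f := fun x => |x - u| * Real.exp (-ψ x))
        (s := I ∩ Iic u)
    refine this.1 ?_
    convert h2 using 1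
    · ext x
      simp only [Function.comp]
      rw [show -x - u = -(x - -u) by ring, abs_neg]
    · ext x
      simp only [mem_preimage, mem_inter_iff, mem_Iic, mem_Ici, Set.mem_neg]
      constructor <;> rintro ⟨h, h'⟩ <;> exact ⟨h, by linarith⟩
  have h4 := h3.union h1
  rwa [← inter_union_distrib_left, Iic_union_Ici, inter_univ] at h4

lemma aux_gap_lt (K₁ K₂ K₃ I : Set ℝ) (hI : Convex ℝ I) (hcover : K₁ ∪ K₂ ∪ K₃ = I) (ε : ℝ)
    (hε : 0 < ε) (hsep : ∀ s ∈ K₁, ∀ t ∈ K₃, ε ≤ |s - t|) (x y : ℝ) (hx : x ∈ K₁) (hy : y ∈ K₃)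
    (hxy : x ≤ y) : ENNReal.ofReal ε ≤ volume (K₂ ∩ Icc x y) := by
  have hxI : x ∈ I := hcover ▸ (by simp [hx])
  have hyI : y ∈ I := hcover ▸ (by simp [hy])
  set s := sSup (K₁ ∩ Icc x y) with hs
  have hne : (K₁ ∩ Icc x y).Nonempty := ⟨x, hx, le_rfl, hxy⟩
  have hbd : BddAbove (K₁ ∩ Icc x y) := ⟨y, fun z hz => hz.2.2⟩
  have hxs : x ≤ s := le_csSup hbd ⟨hx, le_rfl, hxy⟩
  have hsy : s ≤ y := csSup_le hne fun z hz => hz.2.2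
  set t := sInf (K₃ ∩ Icc s y) with ht
  have hne' : (K₃ ∩ Icc s y).Nonempty := ⟨y, hy, hsy, le_rfl⟩
  have hbd' : BddBelow (K₃ ∩ Icc s y) := ⟨s, fun z hz => hz.2.1⟩
  have hst : s ≤ t := le_csInf hne' fun z hz => hz.2.1
  have hty : t ≤ y := csInf_le hbd' ⟨hy, hsy, le_rfl⟩
  have hgap : ε ≤ t - s := by
    refine le_of_forall_pos_le_add fun δ hδ => ?_
    obtain ⟨a, ha, ha'⟩ := exists_lt_of_lt_csSup hne (show s - δ/2 < s by linarith)
    obtain ⟨b, hb, hb'⟩ := exists_lt_of_csInf_lt hne' (show t < t + δ/2 by linarith)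
    have h1 := hsep a ha.1 b hb.1
    have h2 : a ≤ s := le_csSup hbd ha
    have h3 : s ≤ b := hb.2.1
    rw [abs_of_nonpos (by linarith)] at h1
    linarith
  have hsub : Ioo s t ⊆ K₂ ∩ Icc x y := by
    intro z hz
    have hzxy : z ∈ Icc x y := ⟨hxs.trans hz.1.le, hz.2.le.trans hty⟩
    have hzI : z ∈ I := hI.ordConnected.out hxI hyI hzxy
    rw [← hcover] at hzI
    refine ⟨?_, hzxy⟩
    rcases hzI with (h | h) | h
    · exact absurd (le_csSup hbd ⟨h, hzxy⟩) (not_le.2 hz.1)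
    · exact h
    · exact absurd (csInf_le hbd' ⟨h, hz.1.le, hzxy.2⟩) (not_le.2 hz.2)
  calc ENNReal.ofReal ε ≤ ENNReal.ofReal (t - s) := ENNReal.ofReal_le_ofReal hgap
    _ = volume (Ioo s t) := Real.volume_Ioo.symm
    _ ≤ _ := measure_mono hsub

lemma aux_gap (K₁ K₂ K₃ I : Set ℝ) (hI : Convex ℝ I) (hcover : K₁ ∪ K₂ ∪ K₃ = I) (ε : ℝ)
    (hε : 0 < ε) (hsep : ∀ s ∈ K₁, ∀ t ∈ K₃, ε ≤ |s - t|) (x y : ℝ) (hx : x ∈ K₁) (hy : y ∈ K₃) :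
    ENNReal.ofReal ε ≤ volume (K₂ ∩ uIcc x y) := by
  rcases le_total x y with h | h
  · rw [uIcc_of_le h]
    exact aux_gap_lt K₁ K₂ K₃ I hI hcover ε hε hsep x y hx hy h
  · rw [uIcc_of_ge h]
    refine aux_gap_lt K₃ K₂ K₁ I hI ?_ ε hε (fun s hs t ht => ?_) y x hy hx h
    · rw [← hcover]; ext z; simp only [mem_union]; tauto
    · rw [abs_sub_comm]; exact hsep t ht s hs

lemma aux_double (ν : Measure ℝ) [IsProbabilityMeasure ν]
    (K₁ K₂ K₃ I : Set ℝ) (hI : Convex ℝ I) (hcover : K₁ ∪ K₂ ∪ K₃ = I)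
    (hm₁ : MeasurableSet K₁) (hm₂ : MeasurableSet K₂) (hm₃ : MeasurableSet K₃)
    (hd₁₃ : Disjoint K₁ K₃) (ε : ℝ)
    (hε : 0 < ε) (hsep : ∀ s ∈ K₁, ∀ t ∈ K₃, ε ≤ |s - t|) :
    ENNReal.ofReal ε * (ν K₁ * ν K₃) ≤ ∫⁻ t in K₂, ν (Iic t) * ν (Ici t) := by
  set Pm := (ν.restrict K₁).prod (ν.restrict K₃) with hPm
  have hS : MeasurableSet {q : (ℝ × ℝ) × ℝ | q.2 ∈ uIcc q.1.1 q.1.2} := by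
    have : {q : (ℝ × ℝ) × ℝ | q.2 ∈ uIcc q.1.1 q.1.2} =
      {q | min q.1.1 q.1.2 ≤ q.2} ∩ {q | q.2 ≤ max q.1.1 q.1.2} := by
      ext q; simp [uIcc, mem_Icc]
    rw [this]
    exact (measurableSet_le (by fun_prop) (by fun_prop)).inter
      (measurableSet_le (by fun_prop) (by fun_prop))
  have e1 := Measure.prod_apply (μ := Pm) (ν := volume.restrict K₂) hS
  have e2 := Measure.prod_apply_symm (μ := Pm) (ν := volume.restrict K₂) hS
  have l1 : ENNReal.ofReal ε * (ν K₁ * ν K₃) ≤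
      (Pm.prod (volume.restrict K₂)) {q : (ℝ × ℝ) × ℝ | q.2 ∈ uIcc q.1.1 q.1.2} := by
    rw [e1]
    have hPm1 : ν K₁ * ν K₃ = Pm univ := by
      rw [hPm, ← univ_prod_univ, Measure.prod_prod, Measure.restrict_apply_univ,
        Measure.restrict_apply_univ]
    rw [hPm1, ← lintegral_const]
    apply lintegral_mono_ae
    have : Pm = (ν.prod ν).restrict (K₁ ×ˢ K₃) := by rw [hPm, Measure.prod_restrict]
    rw [this, ae_restrict_iff' (hm₁.prod hm₃)]
    refine Filter.Eventually.of_forall ?_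
    rintro ⟨x, y⟩ ⟨hx, hy⟩
    have := aux_gap K₁ K₂ K₃ I hI hcover ε hε hsep x y hx hy
    rw [Measure.restrict_apply (by exact measurable_prodMk_left hS), inter_comm]
    exact this
  refine l1.trans ?_
  rw [e2]
  apply lintegral_mono
  intro t
  have hsub : ((fun x : ℝ × ℝ => (x, t)) ⁻¹' {q : (ℝ × ℝ) × ℝ | q.2 ∈ uIcc q.1.1 q.1.2}) ⊆
      (Iic t ×ˢ Ici t) ∪ (Ici t ×ˢ Iic t) := by
    rintro ⟨x, y⟩ h
    simp only [mem_preimage, mem_setOf_eq, mem_uIcc] at h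
    simpa [and_comm] using h
  refine (measure_mono hsub).trans ((measure_union_le _ _).trans ?_)
  rw [hPm, Measure.prod_prod, Measure.prod_prod, Measure.restrict_apply measurableSet_Iic,
    Measure.restrict_apply measurableSet_Iic, Measure.restrict_apply measurableSet_Ici,
    Measure.restrict_apply measurableSet_Ici]
  have key : ∀ S : Set ℝ, MeasurableSet S → ν (S ∩ K₁) + ν (S ∩ K₃) ≤ ν S := by
    intro S hSm
    rw [← measure_union (hd₁₃.mono inter_subset_right inter_subset_right) (hSm.inter hm₃)]
    exact measure_mono (union_subset inter_subset_left inter_subset_left)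
  refine le_trans ?_ (mul_le_mul' (key (Iic t) measurableSet_Iic) (key (Ici t) measurableSet_Ici))
  rw [add_mul, mul_add, mul_add]
  rw [mul_comm (ν (Ici t ∩ K₁))]
  refine add_le_add ?_ ?_
  · exact le_add_self
  · exact le_self_add


lemma aux_F_facts (I : Set ℝ) (hI : Convex ℝ I) (g : ℝ → ℝ)
    (hg0 : ∀ x, 0 ≤ g x) (hgI : ∀ x, x ∉ I → g x = 0)
    (hc : ContinuousOn g (interior I)) (hint : Integrable g) (h1 : ∫ x, g x = 1)
    (F : ℝ → ℝ) (hF : ∀ x, F x = ∫ y in Iic x, g y) :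
    (∀ x ∈ interior I, HasDerivAt F (g x) x) ∧ (∀ x, 0 ≤ F x ∧ F x ≤ 1) ∧ Monotone F ∧
    (∀ w ∈ Ioo (0:ℝ) 1, ∃ x ∈ interior I, F x = w) := by
  have hFe : ∀ x, F x = F 0 + ∫ y in (0:ℝ)..x, g y := by
    intro x
    rw [← intervalIntegral.integral_Iic_sub_Iic hint.integrableOn hint.integrableOn, hF, hF]
    ring
  have hFe' : F = fun x => F 0 + ∫ y in (0:ℝ)..x, g y := funext hFe
  have hcont : Continuous F := by
    rw [hFe']
    exact continuous_const.add (intervalIntegral.continuous_primitive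
      (fun a b => hint.intervalIntegrable) 0)
  refine ⟨?_, ?_, ?_, ?_⟩
  · intro x hx
    rw [hFe']
    refine HasDerivAt.const_add _ ?_
    refine intervalIntegral.integral_hasDerivAt_right hint.intervalIntegrable ?_
      (hc.continuousAt (isOpen_interior.mem_nhds hx))
    exact ⟨univ, Filter.univ_mem, hint.aestronglyMeasurable.restrict⟩
  · intro x
    rw [hF]
    refine ⟨setIntegral_nonneg measurableSet_Iic fun y _ => hg0 y, ?_⟩
    rw [← h1]
    exact setIntegral_le_integral hint (Filter.Eventually.of_forall hg0)
  · intro x y hxy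
    rw [hF, hF]
    exact setIntegral_mono_set hint.integrableOn (Filter.Eventually.of_forall hg0)
      (Iic_subset_Iic.2 hxy).eventuallyLE
  · rintro w ⟨hw0, hw1⟩
    have ht0 : Filter.Tendsto F Filter.atBot (nhds 0) := by
      rw [show F = fun x => ∫ y in Iic x, g y from funext hF]
      exact tendsto_integral_Iic_zero Filter.tendsto_id
    have ht1 : Filter.Tendsto F Filter.atTop (nhds 1) := by
      rw [show F = fun x => ∫ y in Iic x, g y from funext hF, ← h1]
      exact (aecover_Iic Filter.tendsto_id).integral_tendsto_of_countably_generated hint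
    obtain ⟨a, ha⟩ := (ht0.eventually (eventually_le_nhds hw0)).exists
    obtain ⟨b, hb⟩ := (ht1.eventually (eventually_ge_nhds hw1)).exists
    obtain ⟨x, hx⟩ := mem_range_of_exists_le_of_exists_ge hcont ⟨a, ha⟩ ⟨b, hb⟩
    refine ⟨x, ?_, hx⟩
    by_contra hxi
    by_cases hl : ∃ p ∈ I, p < x
    · by_cases hr : ∃ q ∈ I, x < q
      · obtain ⟨p, hp, hpx⟩ := hl
        obtain ⟨q, hq, hxq⟩ := hr
        exact hxi (mem_interior.2 ⟨Ioo p q,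
          (Ioo_subset_Icc_self).trans (hI.ordConnected.out hp hq), isOpen_Ioo, hpx, hxq⟩)
      · push Not at hr
        have : F x = 1 := by
          rw [hF, ← h1]
          apply setIntegral_eq_integral_of_forall_compl_eq_zero
          intro y hy
          exact hgI y fun hyI => hy (hr y hyI)
        linarith
    · push Not at hl
      have : F x = 0 := by
        rw [hF, integral_Iic_eq_integral_Iio]
        apply setIntegral_eq_zero_of_forall_eq_zero
        intro y hy
        exact hgI y fun hyI => absurd (hl y hyI) (not_le.2 hy)
      linarith

lemma aux_tangent (I : Set ℝ) (φ : ℝ → ℝ) (hφ : ConvexOn ℝ I φ) (F : ℝ → ℝ)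
    (hF : ∀ x ∈ interior I, HasDerivAt F (Real.exp (-φ x)) x) (t : ℝ) (ht : t ∈ interior I) :
    ∃ γ : ℝ, ∀ x ∈ interior I, Real.exp (-φ x) ≤ Real.exp (-φ t) - γ * (F x - F t) := by
  set d : ℝ → ℝ := fun x => derivWithin φ (Ioi x) x with hd
  have hoc : (interior I).OrdConnected := hφ.1.interior.ordConnected
  have hmono : MonotoneOn d (interior I) := hφ.monotoneOn_rightDeriv
  have hφc : ContinuousOn φ (interior I) :=
    (hφ.subset interior_subset hφ.1.interior).continuousOn isOpen_interior
  set D : ℝ → ℝ := fun x => Real.exp (-φ x) + d t * F x with hD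
  have hDc : ContinuousOn D (interior I) := by
    apply ContinuousOn.add
    · exact hφc.neg.rexp
    · exact continuousOn_const.mul fun x hx => (hF x hx).continuousAt.continuousWithinAt
  have hDd : ∀ x ∈ interior I, HasDerivWithinAt D ((d t - d x) * Real.exp (-φ x)) (Ici x) x := by
    intro x hx
    have h1 : HasDerivWithinAt φ (d x) (Ici x) x :=
      (hφ.hasDerivWithinAt_rightDeriv_of_mem_interior hx).Ici_of_Ioi
    have h2 := h1.neg.exp.add (((hF x hx).hasDerivWithinAt (s := Ici x)).const_mul (d t))
    refine h2.congr_deriv ?_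
    simp only [Pi.neg_apply]
    ring
  refine ⟨d t, fun x hx => ?_⟩
  suffices h : D x ≤ D t by
    simp only [hD] at h
    linarith
  rcases le_total t x with h | h
  · have hsub : Icc t x ⊆ interior I := hoc.out ht hx
    refine image_le_of_deriv_right_le_deriv_boundary (hDc.mono hsub)
      (fun y hy => hDd y (hsub (Ico_subset_Icc_self hy))) (B := fun _ => D t) (B' := fun _ => 0)
      le_rfl continuousOn_const (fun y _ => hasDerivWithinAt_const _ _ _) ?_ ⟨h, le_rfl⟩
    intro y hy
    have := hmono ht (hsub (Ico_subset_Icc_self hy)) hy.1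
    exact mul_nonpos_of_nonpos_of_nonneg (by linarith) (Real.exp_nonneg _)
  · have hsub : Icc x t ⊆ interior I := hoc.out hx ht
    refine image_le_of_deriv_right_le_deriv_boundary (f := fun _ => D x) (f' := fun _ => 0)
      (B := D) continuousOn_const (fun y _ => hasDerivWithinAt_const _ _ _) le_rfl (hDc.mono hsub)
      (fun y hy => hDd y (hsub (Ico_subset_Icc_self hy))) ?_ ⟨h, le_rfl⟩
    intro y hy
    have := hmono (hsub (Ico_subset_Icc_self hy)) ht hy.2.le
    exact mul_nonneg (by linarith) (Real.exp_nonneg _)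

lemma aux_moment (J : Set ℝ) (hJ : Convex ℝ J) (hJo : IsOpen J) (g F : ℝ → ℝ)
    (hg0 : ∀ x, 0 ≤ g x) (hc : ContinuousOn g J)
    (hF : ∀ x ∈ J, HasDerivAt F (g x) x) (hF01 : ∀ x, 0 ≤ F x ∧ F x ≤ 1) (hFm : Monotone F)
    (hsurj : ∀ w ∈ Ioo (0:ℝ) 1, ∃ x ∈ J, F x = w) (u : ℝ)
    (hint : Integrable (fun x => |x - u| * g x))
    (A B : ℝ) (hA : 0 < A) (hB : 0 < B) (hAB : A ≠ B)
    (hle : ∀ x ∈ J, g x ≤ A * (1 - F x) + B * F x) :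
    B * Real.log B + A * Real.log A - (A + B) * Real.log ((A + B) / 2) ≤
      (∫ x, |x - u| * g x) * (B - A)^2 := by
  have hBA : B - A ≠ 0 := sub_ne_zero.2 hAB.symm
  have hoc := hJ.ordConnected
  set l : ℝ → ℝ := fun w => A * (1 - w) + B * w with hl
  have hlpos : ∀ x, 0 < l (F x) := by
    intro x
    obtain ⟨h0, h1⟩ := hF01 x
    simp only [hl]
    rcases h0.eq_or_lt with h | h
    · rw [← h]; simpa using hA
    · have : 0 ≤ A * (1 - F x) := mul_nonneg hA.le (by linarith)
      have : 0 < B * F x := mul_pos hB h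
      linarith
  have hld : ∀ w, HasDerivAt l (B - A) w := by
    intro w
    have h := (((hasDerivAt_id' w).const_sub 1).const_mul A).fun_add
      ((hasDerivAt_id' w).const_mul B)
    exact h.congr_deriv (by ring)
  set Q : ℝ → ℝ := fun w => Real.log (l w) / (B - A) with hQ
  set R : ℝ → ℝ := fun w => (l w * Real.log (l w) - l w) / (B - A)^2 with hR
  have hlc : Continuous l := by simp only [hl]; fun_prop
  have hRc : Continuous R :=
    ((Real.continuous_mul_log.comp hlc).sub hlc).div_const _
  have hQd : ∀ x ∈ J, HasDerivAt (fun x => Q (F x)) (g x / l (F x)) x := by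
    intro x hx
    have h := (((hld (F x)).comp x (hF x hx)).log (hlpos x).ne').div_const (B - A)
    refine h.congr_deriv ?_
    simp only [Function.comp]
    have := (hlpos x).ne'
    field_simp
  have hRd : ∀ x ∈ J, HasDerivAt (fun x => R (F x)) (Q (F x) * g x) x := by
    intro x hx
    have h0 := (hld (F x)).comp x (hF x hx)
    have h := ((h0.mul (h0.log (hlpos x).ne')).sub h0).div_const ((B - A)^2)
    refine h.congr_deriv ?_
    simp only [Function.comp, hQ]
    have := (hlpos x).ne'
    field_simp
    ring
  have hmonoQ : MonotoneOn (fun x => x - Q (F x)) J := by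
    have hdd : ∀ x ∈ J, HasDerivAt (fun x => x - Q (F x)) (1 - g x / l (F x)) x :=
      fun x hx => (hasDerivAt_id' x).sub (hQd x hx)
    apply monotoneOn_of_deriv_nonneg hJ
    · exact fun x hx => (hdd x hx).continuousAt.continuousWithinAt
    · rw [hJo.interior_eq]
      exact fun x hx => (hdd x hx).differentiableAt.differentiableWithinAt
    · rw [hJo.interior_eq]
      intro x hx
      rw [(hdd x hx).deriv, sub_nonneg, div_le_one (hlpos x)]
      exact hle x hx
  obtain ⟨M, hMJ, hM⟩ := hsurj (1/2) (by norm_num)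
  set c := M - u - Q (1/2) with hcdef
  have hQFc : ContinuousOn (fun x => Q (F x)) J :=
    fun x hx => (hQd x hx).continuousAt.continuousWithinAt
  have hSd : ∀ x ∈ J, HasDerivAt (fun x => R (F x) + c * F x) ((Q (F x) + c) * g x) x := by
    intro x hx
    exact ((hRd x hx).fun_add ((hF x hx).const_mul c)).congr_deriv (by ring)
  have hftc : ∀ a ∈ J, ∀ b ∈ J, a ≤ b →
      IntervalIntegrable (fun x => (Q (F x) + c) * g x) volume a b ∧
      ∫ x in a..b, (Q (F x) + c) * g x = (R (F b) + c * F b) - (R (F a) + c * F a) := by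
    intro a ha b hb hab
    have hsub : uIcc a b ⊆ J := by rw [uIcc_of_le hab]; exact hoc.out ha hb
    have hi : IntervalIntegrable (fun x => (Q (F x) + c) * g x) volume a b :=
      (((hQFc.add continuousOn_const).mul hc).mono hsub).intervalIntegrable
    exact ⟨hi, intervalIntegral.integral_eq_sub_of_hasDerivAt (fun x hx => hSd x (hsub hx)) hi⟩
  have hmain : ∀ w ∈ Ioo (1/2 : ℝ) 1,
      R w + R (1 - w) - 2 * R (1/2) ≤ ∫ x, |x - u| * g x := by
    rintro w ⟨hw0, hw1⟩
    obtain ⟨b, hbJ, hb⟩ := hsurj w ⟨by linarith, hw1⟩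
    obtain ⟨a, haJ, ha⟩ := hsurj (1 - w) ⟨by linarith, by linarith⟩
    have haM : a ≤ M := by
      by_contra h
      have := hFm (not_le.1 h).le
      linarith
    have hMb : M ≤ b := by
      by_contra h
      have := hFm (not_le.1 h).le
      linarith
    obtain ⟨i1, e1⟩ := hftc a haJ M hMJ haM
    obtain ⟨i2, e2⟩ := hftc M hMJ b hbJ hMb
    have l1 : ∫ x in a..M, -((Q (F x) + c) * g x) ≤ ∫ x in a..M, |x - u| * g x := by
      refine intervalIntegral.integral_mono_on haM i1.neg hint.intervalIntegrable ?_
      intro x hx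
      have hxJ : x ∈ J := hoc.out haJ hMJ hx
      have h := hmonoQ hxJ hMJ hx.2
      simp only [hM] at h
      have h2 := neg_abs_le (x - u)
      rw [← neg_mul]
      exact mul_le_mul_of_nonneg_right (by rw [hcdef]; linarith) (hg0 x)
    have l2 : ∫ x in M..b, (Q (F x) + c) * g x ≤ ∫ x in M..b, |x - u| * g x := by
      refine intervalIntegral.integral_mono_on hMb i2 hint.intervalIntegrable ?_
      intro x hx
      have hxJ : x ∈ J := hoc.out hMJ hbJ hx
      have h := hmonoQ hMJ hxJ hx.1
      simp only [hM] at h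
      have h2 := le_abs_self (x - u)
      exact mul_le_mul_of_nonneg_right (by rw [hcdef]; linarith) (hg0 x)
    have l3 : (∫ x in a..M, |x - u| * g x) + (∫ x in M..b, |x - u| * g x) ≤
        ∫ x, |x - u| * g x := by
      rw [intervalIntegral.integral_add_adjacent_intervals hint.intervalIntegrable
        hint.intervalIntegrable, intervalIntegral.integral_of_le (haM.trans hMb)]
      exact setIntegral_le_integral hint
        (Filter.Eventually.of_forall fun x => mul_nonneg (abs_nonneg _) (hg0 x))
    rw [intervalIntegral.integral_neg, e1] at l1
    rw [e2] at l2
    rw [hM, ha] at l1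
    rw [hM, hb] at l2
    linarith
  have hlim : R 1 + R (1 - 1) - 2 * R (1/2) ≤ ∫ x, |x - u| * g x := by
    have hcl : (1:ℝ) ∈ closure (Ioo (1/2 : ℝ) 1) := by
      rw [closure_Ioo (by norm_num)]; norm_num
    exact le_on_closure (f := fun w => R w + R (1 - w) - 2 * R (1/2))
      (g := fun _ => ∫ x, |x - u| * g x) hmain
      (by fun_prop) (by fun_prop) hcl
  have hR2 : (R 1 + R (1 - 1) - 2 * R (1/2)) * (B - A)^2 =
      B * Real.log B + A * Real.log A - (A + B) * Real.log ((A + B) / 2) := by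
    simp only [hR, hl]
    rw [show A * (1 - 1) + B * 1 = B by ring, show A * (1 - (1 - 1)) + B * (1 - 1) = A by ring,
      show A * (1 - 1/2) + B * (1/2) = (A + B)/2 by ring]
    field_simp
    ring
  rw [← hR2]
  exact mul_le_mul_of_nonneg_right hlim (sq_nonneg _)


lemma aux_pointwise (I : Set ℝ) (hI : Convex ℝ I) (φ : ℝ → ℝ) (hφ : ConvexOn ℝ I φ) (g : ℝ → ℝ)
    (hg : g = I.indicator fun x => Real.exp (-φ x)) (hint : Integrable g) (h1 : ∫ x, g x = 1)
    (F : ℝ → ℝ) (hF : ∀ x, F x = ∫ y in Iic x, g y) (u : ℝ)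
    (hintu : Integrable (fun x => |x - u| * g x)) (t : ℝ) (ht : t ∈ interior I) :
    Real.log 2 * (F t * (1 - F t)) ≤ (∫ x, |x - u| * g x) * g t := by
  have hg0 : ∀ x, 0 ≤ g x := fun x => by
    rw [hg]; exact indicator_nonneg (fun _ _ => Real.exp_nonneg _) x
  have hgI : ∀ x, x ∉ I → g x = 0 := fun x hx => by rw [hg]; exact indicator_of_notMem hx _
  have hgin : ∀ x ∈ interior I, g x = Real.exp (-φ x) := fun x hx => by
    rw [hg]; exact indicator_of_mem (interior_subset hx) _
  have hφc : ContinuousOn φ (interior I) :=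
    (hφ.subset interior_subset hφ.1.interior).continuousOn isOpen_interior
  have hc : ContinuousOn g (interior I) := hφc.neg.rexp.congr hgin
  obtain ⟨hFd, hF01, hFm, hsurj⟩ := aux_F_facts I hI g hg0 hgI hc hint h1 F hF
  obtain ⟨γ, hγ⟩ := aux_tangent I φ hφ F (fun x hx => hgin x hx ▸ hFd x hx) t ht
  set m := ∫ x, |x - u| * g x with hm
  have hm0 : 0 ≤ m := integral_nonneg fun x => mul_nonneg (abs_nonneg _) (hg0 x)
  obtain ⟨hv0, hv1⟩ := hF01 t
  set v := F t with hv
  obtain ⟨A₀, hA₀⟩ : ∃ A₀, A₀ = g t + γ * v := ⟨_, rfl⟩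
  obtain ⟨B₀, hB₀⟩ : ∃ B₀, B₀ = g t - γ * (1 - v) := ⟨_, rfl⟩
  have hle : ∀ x ∈ interior I, g x ≤ A₀ * (1 - F x) + B₀ * F x := by
    intro x hx
    have := hγ x hx
    rw [← hgin x hx, ← hgin t ht] at this
    rw [hA₀, hB₀]
    linarith
  have hpos : ∀ w ∈ closure (Ioo (0:ℝ) 1), 0 ≤ A₀ * (1 - w) + B₀ * w := by
    intro w hw
    refine le_on_closure (f := fun _ => (0:ℝ)) (g := fun w => A₀ * (1 - w) + B₀ * w) ?_
      (by fun_prop) (by fun_prop) hw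
    intro w hw
    obtain ⟨x, hx, rfl⟩ := hsurj w hw
    exact (hg0 x).trans (hle x hx)
  rw [closure_Ioo (by norm_num)] at hpos
  have hA0 : 0 ≤ A₀ := by simpa using hpos 0 (by simp)
  have hB0 : 0 ≤ B₀ := by simpa using hpos 1 (by simp)
  have key : ∀ η : ℝ, 0 < η → Real.log 2 * (v * (1 - v)) ≤ m * (g t + 2 * η) := by
    intro η hη
    obtain ⟨k, hk1, hk2, hne⟩ : ∃ k : ℝ, 1 ≤ k ∧ k ≤ 2 ∧ A₀ + η ≠ B₀ + k * η := by
      by_cases h : A₀ = B₀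
      · exact ⟨2, by norm_num, le_rfl, by rw [h]; intro h'; linarith⟩
      · exact ⟨1, le_rfl, by norm_num, fun h' => h (by linarith)⟩
    have hB : 0 < B₀ + k * η := by
      have : 0 < k * η := by positivity
      linarith
    have hA : 0 < A₀ + η := by linarith
    have hkη : η ≤ k * η := by nlinarith
    have h2 : k * η ≤ 2 * η := by nlinarith
    have hmom := aux_moment (interior I) hI.interior isOpen_interior g F hg0 hc hFd hF01 hFm hsurj
      u hintu (A₀ + η) (B₀ + k * η) hA hB hne (by
        intro x hx
        have := hle x hx
        obtain ⟨h0, h1⟩ := hF01 x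
        have e1 : 0 ≤ η * (1 - F x) := mul_nonneg hη.le (by linarith)
        have e2 : 0 ≤ k * η * F x := mul_nonneg (by positivity) h0
        linarith)
    have hphi := aux_phi (A₀ + η) (B₀ + k * η) v hA hB hv0 hv1
    have hl0 : 0 ≤ (A₀ + η) * (1 - v) + (B₀ + k * η) * v :=
      add_nonneg (mul_nonneg hA.le (by linarith)) (mul_nonneg hB.le hv0)
    have h3 := hphi.trans (mul_le_mul_of_nonneg_left hmom hl0)
    have hsq : 0 < (B₀ + k * η - (A₀ + η))^2 := by
      have : B₀ + k * η - (A₀ + η) ≠ 0 := sub_ne_zero.2 hne.symm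
      positivity
    rw [← mul_assoc (_ + _) _ ((B₀ + k * η - (A₀ + η))^2)] at h3
    have h4 := le_of_mul_le_mul_right h3 hsq
    have h5 : (A₀ + η) * (1 - v) + (B₀ + k * η) * v ≤ g t + 2 * η := by
      have e : A₀ * (1 - v) + B₀ * v = g t := by rw [hA₀, hB₀]; ring
      nlinarith
    calc _ ≤ _ := h4
      _ ≤ (g t + 2 * η) * m := mul_le_mul_of_nonneg_right h5 hm0
      _ = _ := mul_comm _ _
  refine le_of_forall_pos_le_add fun δ hδ => ?_
  have := key (δ / (2 * (m + 1))) (by positivity)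
  refine this.trans ?_
  have e : m * (g t + 2 * (δ / (2 * (m + 1)))) = m * g t + δ * (m / (m + 1)) := by
    field_simp
  rw [e]
  have : m / (m + 1) ≤ 1 := (div_le_one (by linarith)).2 (by linarith)
  nlinarith

lemma aux_normalized (I : Set ℝ) (hI : Convex ℝ I) (hIm : MeasurableSet I) (φ : ℝ → ℝ)
    (hφ : ConvexOn ℝ I φ) (hint : IntegrableOn (fun x => Real.exp (-φ x)) I)
    (h1 : ∫ x in I, Real.exp (-φ x) = 1) (K₁ K₂ K₃ : Set ℝ)
    (hm₁ : MeasurableSet K₁) (hm₂ : MeasurableSet K₂) (hm₃ : MeasurableSet K₃)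
    (hd₁₃ : Disjoint K₁ K₃)
    (hcover : K₁ ∪ K₂ ∪ K₃ = I)
    (ε : ℝ) (hε : 0 < ε)
    (hsep : ∀ s ∈ K₁, ∀ t ∈ K₃, ε ≤ |s - t|)
    (u : ℝ) (hu : u ∈ I) :
    ε * Real.log 2 * ((∫ x in K₁, Real.exp (-φ x)) * (∫ x in K₃, Real.exp (-φ x))) ≤
      (∫ x in I, |x - u| * Real.exp (-φ x)) * ∫ x in K₂, Real.exp (-φ x) := by
  obtain ⟨g, hg⟩ : ∃ g, g = I.indicator fun x => Real.exp (-φ x) := ⟨_, rfl⟩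
  have hg0 : ∀ x, 0 ≤ g x := fun x => by
    rw [hg]; exact indicator_nonneg (fun _ _ => Real.exp_nonneg _) x
  have hgi : Integrable g := by rw [hg]; exact hint.integrable_indicator hIm
  have hg1 : ∫ x, g x = 1 := by rw [hg, integral_indicator hIm, h1]
  have hgu' : (fun x => |x - u| * g x) = I.indicator fun x => |x - u| * Real.exp (-φ x) := by
    rw [hg]; ext x
    by_cases hx : x ∈ I <;> simp [hx]
  have hgui : Integrable (fun x => |x - u| * g x) := by
    rw [hgu']
    exact (aux_integrable I hI hIm φ hφ hint u hu).integrable_indicator hIm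
  have hgu : ∫ x in I, |x - u| * Real.exp (-φ x) = ∫ x, |x - u| * g x := by
    rw [hgu', integral_indicator hIm]
  have hK : ∀ K ⊆ I, MeasurableSet K → ∫ x in K, Real.exp (-φ x) = ∫ x in K, g x := by
    intro K hKI hKm
    refine setIntegral_congr_fun hKm fun x hx => ?_
    simp [hg, indicator_of_mem (hKI hx)]
  have s1 : K₁ ⊆ I := hcover ▸ (subset_union_left.trans subset_union_left)
  have s2 : K₂ ⊆ I := hcover ▸ (subset_union_right.trans subset_union_left)
  have s3 : K₃ ⊆ I := hcover ▸ subset_union_right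
  rw [hgu, hK K₁ s1 hm₁, hK K₂ s2 hm₂, hK K₃ s3 hm₃]
  set m := ∫ x, |x - u| * g x with hm
  have hm0 : 0 ≤ m := integral_nonneg fun x => mul_nonneg (abs_nonneg _) (hg0 x)
  have hlog : 0 < Real.log 2 := Real.log_pos (by norm_num)
  set ν := (volume : Measure ℝ).withDensity (fun x => ENNReal.ofReal (g x)) with hν
  have hνS : ∀ S, MeasurableSet S → ν S = ENNReal.ofReal (∫ x in S, g x) := by
    intro S hS
    rw [hν, withDensity_apply _ hS, ofReal_integral_eq_lintegral_ofReal hgi.integrableOn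
      (Filter.Eventually.of_forall hg0)]
  have hprob : IsProbabilityMeasure ν := ⟨by
    rw [hνS univ MeasurableSet.univ, setIntegral_univ, hg1, ENNReal.ofReal_one]⟩
  have hdb := aux_double ν K₁ K₂ K₃ I hI hcover hm₁ hm₂ hm₃ hd₁₃ ε hε hsep
  have hnull : ∀ᵐ t : ℝ, t ∈ K₂ → t ∈ interior I := by
    have hf : volume (frontier I) = 0 := hI.addHaar_frontier volume
    rw [measure_eq_zero_iff_ae_notMem] at hf
    filter_upwards [hf] with t ht htK
    by_contra h
    exact ht ⟨subset_closure (s2 htK), h⟩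
  have hbound : ∫⁻ t in K₂, ν (Iic t) * ν (Ici t) ≤
      ∫⁻ t in K₂, ENNReal.ofReal (m / Real.log 2 * g t) := by
    apply lintegral_mono_ae
    rw [ae_restrict_iff' hm₂]
    filter_upwards [hnull] with t ht htK
    have hp := aux_pointwise I hI φ hφ g hg hgi hg1 (fun x => ∫ y in Iic x, g y) (fun _ => rfl)
      u hgui t (ht htK)
    have hc : ∫ y in Ici t, g y = 1 - ∫ y in Iic t, g y := by
      rw [integral_Ici_eq_integral_Ioi, ← hg1, ← intervalIntegral.integral_Iic_add_Ioi
        hgi.integrableOn hgi.integrableOn (b := t)]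
      ring
    rw [hνS _ measurableSet_Iic, hνS _ measurableSet_Ici, hc, ← ENNReal.ofReal_mul
      (setIntegral_nonneg measurableSet_Iic fun y _ => hg0 y)]
    apply ENNReal.ofReal_le_ofReal
    rw [div_mul_eq_mul_div, le_div_iff₀ hlog, mul_comm]
    exact hp
  have hfin := hdb.trans hbound
  have hi2 : IntegrableOn (fun t => m / Real.log 2 * g t) K₂ := (hgi.const_mul _).integrableOn
  have hn1 : 0 ≤ ∫ x in K₁, g x := setIntegral_nonneg hm₁ fun y _ => hg0 y
  rw [← ofReal_integral_eq_lintegral_ofReal hi2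
    (Filter.Eventually.of_forall fun t => mul_nonneg (by positivity) (hg0 t)),
    hνS _ hm₁, hνS _ hm₃, ← ENNReal.ofReal_mul hn1, ← ENNReal.ofReal_mul hε.le,
    ENNReal.ofReal_le_ofReal_iff (setIntegral_nonneg hm₂
      fun y _ => mul_nonneg (by positivity) (hg0 y)), integral_const_mul,
    div_mul_eq_mul_div, le_div_iff₀ hlog] at hfin
  linarith

/-- One-dimensional needle form of the KLS isoperimetric inequality: for a probability
measure with log-concave density proportional to `e^{-ψ}` on an interval `I`, and a
measurable partition `K₁ ∪ K₂ ∪ K₃ = I` with `dist(K₁,K₃) ≥ ε`,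
`(m/(ε log 2))·μ(K₂) ≥ μ(K₁)·μ(K₃)` where `m = ∫ |x - u| dμ`. -/
theorem stmt_13 (I : Set ℝ) (hI : Convex ℝ I) (hImeas : MeasurableSet I)
    (ψ : ℝ → ℝ) (hψ : ConvexOn ℝ I ψ)
    (hint : IntegrableOn (fun x => Real.exp (-ψ x)) I)
    (Ztot : ℝ) (hZ : Ztot = ∫ x in I, Real.exp (-ψ x)) (hZpos : 0 < Ztot)
    (μS : Set ℝ → ℝ) (hμS : ∀ S : Set ℝ, μS S = (∫ x in S, Real.exp (-ψ x)) / Ztot)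
    (K₁ K₂ K₃ : Set ℝ)
    (hm₁ : MeasurableSet K₁) (hm₂ : MeasurableSet K₂) (hm₃ : MeasurableSet K₃)
    (hd₁₂ : Disjoint K₁ K₂) (hd₂₃ : Disjoint K₂ K₃) (hd₁₃ : Disjoint K₁ K₃)
    (hcover : K₁ ∪ K₂ ∪ K₃ = I)
    (ε : ℝ) (hε : 0 < ε)
    (hsep : ∀ s ∈ K₁, ∀ t ∈ K₃, ε ≤ |s - t|)
    (u : ℝ) (hu : u ∈ I)
    (m : ℝ) (hm : m = (∫ x in I, |x - u| * Real.exp (-ψ x)) / Ztot) :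
    (m / (ε * Real.log 2)) * μS K₂ ≥ μS K₁ * μS K₃ := by
  have hex : ∀ x, Real.exp (-(ψ x + Real.log Ztot)) = Real.exp (-ψ x) / Ztot := by
    intro x
    rw [neg_add, Real.exp_add, Real.exp_neg (Real.log Ztot), Real.exp_log hZpos, div_eq_mul_inv]
  have hφ : ConvexOn ℝ I (fun x => ψ x + Real.log Ztot) := hψ.add_const _
  have key := aux_normalized I hI hImeas (fun x => ψ x + Real.log Ztot) hφ
    (by simp only [hex]; exact hint.div_const _)
    (by simp only [hex]; rw [integral_div, ← hZ, div_self hZpos.ne'])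
    K₁ K₂ K₃ hm₁ hm₂ hm₃ hd₁₃ hcover ε hε hsep u hu
  simp only [hex, integral_div, ← mul_div_assoc] at key
  rw [← hm] at key
  rw [← hμS K₁] at key
  rw [mul_div_assoc m, ← hμS K₂, mul_div_assoc, mul_div_assoc, ← hμS K₃] at key
  have hlog : 0 < Real.log 2 := Real.log_pos (by norm_num)
  rw [ge_iff_le, div_mul_eq_mul_div, le_div_iff₀ (mul_pos hε hlog)]
  linarith
end
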